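/- arXiv:1601.00506 — 3 statements merged into one kernel-verified Lean document; each statement's English description precedes it below -/
import Mathlib

section
/- For every path graph P on n ≥ 4 vertices, there exists a set F of exactly ⌈(n+2)/2⌉ unordered pairs of distinct vertices of P that are not edges of P such that every vertex of the graph P + F has degree at least 3. -/
/-- The degree of a vertex `v` in a simple graph `G`, as the cardinality of its
neighbor set. -/
noncomputable def degN {V : Type*} (G : SimpleGraph V) (v : V) : ℕ :=
  (G.neighborSet v).ncard

/-- A finite simple graph is 3-vertex-connected if removing any set of at most two
vertices leaves a connected induced subgraph. -/
def ThreeConnected {V : Type*} [Fintype V] (G : SimpleGraph V) : Prop :=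
  ∀ S : Finset V, S.card ≤ 2 → (G.induce ((S : Set V)ᶜ)).Connected

/-!
In a connected graph of maximum degree at most two, a longest path is spanning: a neighbour of the
path lying off it would extend the path at an end or be a third neighbour of an interior vertex.
A path in an acyclic graph has no chords, because paths between two given vertices are unique.
Hence a tree of maximum degree at most two on `n` vertices is isomorphic to the path
`0, 1, …, n - 1`.

Augment this path by the pair `{0, n - 1}`, closing it to a cycle, and by all `n - ⌊n / 2⌋` pairs of
vertices at distance `⌊n / 2⌋`. On the cycle every vertex has degree two, and the pairs at distance
`⌊n / 2⌋` cover all vertices.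
-/

open SimpleGraph

section Degree

variable {V W : Type*} {G : SimpleGraph V} {H : SimpleGraph W}

lemma three_le_degN [Finite V] {v a b c : V} (ha : G.Adj v a) (hb : G.Adj v b) (hc : G.Adj v c)
    (hab : a ≠ b) (hac : a ≠ c) (hbc : b ≠ c) : 3 ≤ degN G v :=
  (Set.two_lt_ncard_iff (Set.toFinite _)).2 ⟨a, b, c, ha, hb, hc, hab, hac, hbc⟩

lemma degN_apply_iso (φ : G ≃g H) (v : V) : degN H (φ v) = degN G v :=
  (Set.ncard_congr' (φ.mapNeighborSet v)).symm

/-- An isomorphism `G ≃g H` remains one after adding an edge set to `G` and its image to `H`. It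
carries an augmentation of one path graph over to any other. -/
def isoSupFromEdgeSet (φ : G ≃g H) (F : Set (Sym2 V)) :
    (G ⊔ fromEdgeSet F) ≃g (H ⊔ fromEdgeSet (Sym2.map φ '' F)) where
  toEquiv := φ.toEquiv
  map_rel_iff' {a b} := by
    have hmem : s(φ a, φ b) ∈ Sym2.map φ '' F ↔ s(a, b) ∈ F :=
      (Sym2.map.injective φ.injective).mem_set_image (a := s(a, b))
    simp [hmem, φ.map_adj_iff]

lemma degN_sup_fromEdgeSet_image (φ : G ≃g H) (F : Set (Sym2 V)) (v : V) :
    degN (H ⊔ fromEdgeSet (Sym2.map φ '' F)) (φ v) = degN (G ⊔ fromEdgeSet F) v :=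
  degN_apply_iso (isoSupFromEdgeSet φ F) v

end Degree

section LongestPath

variable {V : Type*} {G : SimpleGraph V} {u v x y : V} {p : G.Walk u v}

lemma three_le_degN_getVert_of_adj [Finite V] (hp : p.IsPath) {i : ℕ} (hi : i ≠ 0)
    (hlt : i < p.length) (hadj : G.Adj (p.getVert i) y) (hy : y ∉ p.support) :
    3 ≤ degN G (p.getVert i) := by
  have hsub : insert y (p.toSubgraph.neighborSet (p.getVert i)) ⊆ G.neighborSet (p.getVert i) :=
    Set.insert_subset hadj (p.toSubgraph.neighborSet_subset _)
  have hnot : y ∉ p.toSubgraph.neighborSet (p.getVert i) := fun h ↦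
    hy (p.mem_verts_toSubgraph.1 (p.toSubgraph.neighborSet_subset_verts _ h))
  have hcard := Set.ncard_insert_of_notMem hnot p.finite_neighborSet_toSubgraph
  rw [hp.ncard_neighborSet_toSubgraph_internal_eq_two hi hlt] at hcard
  exact hcard.symm.trans_le (Set.ncard_le_ncard hsub)

lemma mem_support_of_adj_of_forall_length_le [Finite V] (hdeg : ∀ w, degN G w ≤ 2)
    (hp : p.IsPath) (hmax : ∀ (u' v' : V) (q : G.Walk u' v'), q.IsPath → q.length ≤ p.length)
    (hx : x ∈ p.support) (hadj : G.Adj x y) : y ∈ p.support := by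
  by_contra hy
  obtain ⟨i, rfl, hi⟩ := Walk.mem_support_iff_exists_getVert.1 hx
  rcases eq_or_ne i 0 with rfl | hpos
  · rw [Walk.getVert_zero] at hadj
    simpa using hmax _ _ _ (hp.cons hy (h := hadj.symm))
  rcases hi.eq_or_lt with rfl | hlt
  · rw [Walk.getVert_length] at hadj
    simpa using hmax _ _ _ (hp.concat hy hadj)
  · have := three_le_degN_getVert_of_adj hp hpos hlt hadj hy
    exact absurd (hdeg (p.getVert i)) (by omega)

lemma exists_isPath_forall_mem_support [Finite V] (hG : G.Connected) (hdeg : ∀ w, degN G w ≤ 2) :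
    ∃ (u v : V) (p : G.Walk u v), p.IsPath ∧ ∀ w, w ∈ p.support := by
  have := hG.nonempty
  obtain ⟨u, v, p, hp, hmax⟩ := Walk.exists_isPath_forall_isPath_length_le_length G
  refine ⟨u, v, p, hp, fun w ↦ ?_⟩
  by_contra hw
  obtain ⟨q⟩ := hG.preconnected u w
  obtain ⟨d, -, hfst, hsnd⟩ := q.exists_boundary_dart {x | x ∈ p.support} p.start_mem_support hw
  exact hsnd (mem_support_of_adj_of_forall_length_le hdeg hp hmax hfst d.adj)

lemma isChordless_of_isPath_of_isAcyclic (hp : p.IsPath) (hG : G.IsAcyclic) : p.IsChordless := by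
  refine Walk.isChordless_iff_forall_mem_edges.2 fun x y hx hy hadj ↦ ?_
  obtain ⟨q, r, rfl⟩ := Walk.mem_support_iff_exists_append.1 hx
  rw [Walk.edges_append, List.mem_append]
  rcases (Walk.mem_support_append_iff q r).1 hy with hq | hr
  · obtain rfl := hG.eq_penultimate_of_adj_end hp.of_append_left hadj hq
    have hnil : ¬ q.Nil := by rintro ⟨⟩; exact hadj.ne rfl
    exact Or.inl (Sym2.eq_swap ▸ q.mk_penultimate_end_mem_edges hnil)
  · obtain rfl := hG.eq_snd_of_adj_start hp.of_append_right hadj hr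
    have hnil : ¬ r.Nil := by rintro ⟨⟩; exact hadj.ne rfl
    exact Or.inr (r.mk_start_snd_mem_edges hnil)

lemma toSubgraph_eq_top_of_isChordless (hp : p.IsChordless) (hsupp : ∀ w, w ∈ p.support) :
    p.toSubgraph = ⊤ := by
  refine top_unique ⟨fun w _ ↦ p.mem_verts_toSubgraph.2 (hsupp w), fun x y hadj ↦ ?_⟩
  exact Walk.adj_toSubgraph_iff_mem_edges.2 (hp.mem_edges (hsupp x) (hsupp y) hadj)

lemma nonempty_pathGraph_iso_of_isTree [Fintype V] (hG : G.IsTree)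
    (hdeg : ∀ w, degN G w ≤ 2) :
    Nonempty (pathGraph (Fintype.card V) ≃g G) := by
  classical
  obtain ⟨u, v, p, hp, hsupp⟩ := exists_isPath_forall_mem_support hG.connected hdeg
  have hchordless := isChordless_of_isPath_of_isAcyclic hp hG.isAcyclic
  have htop := toSubgraph_eq_top_of_isChordless hchordless hsupp
  have hcard : Fintype.card V = p.length + 1 := by
    rw [← (hp.isHamiltonian_of_mem hsupp).length_support, p.length_support]
  have φ := hp.pathGraphIsoToSubgraph
  rw [htop] at φ
  exact hcard ▸ ⟨φ.trans Subgraph.topIso⟩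

end LongestPath

section Chords

/-- The pairs of vertices at distance `d` on the path `0, 1, …, n - 1`, parametrized by their
smaller member. -/
def pairsAtDist (n d : ℕ) : Finset (Sym2 (Fin n)) :=
  Finset.univ.image fun i : Fin (n - d) ↦ s(⟨i, by omega⟩, ⟨i + d, by omega⟩)

lemma mem_pairsAtDist {n d : ℕ} {a b : Fin n} :
    s(a, b) ∈ pairsAtDist n d ↔ (a : ℕ) + d = b ∨ (b : ℕ) + d = a := by
  simp only [pairsAtDist, Finset.mem_image, Finset.mem_univ, true_and, Sym2.eq_iff, Fin.ext_iff]
  constructor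
  · rintro ⟨i, h | h⟩ <;> omega
  · rintro (h | h)
    · exact ⟨⟨a, by omega⟩, Or.inl ⟨rfl, h⟩⟩
    · exact ⟨⟨b, by omega⟩, Or.inr ⟨rfl, h⟩⟩

lemma card_pairsAtDist (n d : ℕ) : (pairsAtDist n d).card = n - d := by
  rw [pairsAtDist, Finset.card_image_of_injective, Finset.card_univ, Fintype.card_fin]
  intro i j h
  simp only [Sym2.eq_iff, Fin.ext_iff] at h ⊢
  omega

lemma disjoint_pairsAtDist {n d d' : ℕ} (h : d ≠ d') :
    Disjoint (pairsAtDist n d) (pairsAtDist n d') := by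
  refine Finset.disjoint_left.2 fun e ↦ ?_
  induction e with | _ a b
  simp only [mem_pairsAtDist]
  omega

lemma exists_mem_pairsAtDist {n d : ℕ} (hd : 2 * d ≤ n) (v : Fin n) :
    ∃ w, s(v, w) ∈ pairsAtDist n d := by
  simp only [mem_pairsAtDist]
  by_cases hv : v + d < n
  · exact ⟨⟨v + d, hv⟩, Or.inl rfl⟩
  · exact ⟨⟨v - d, by omega⟩, Or.inr (by dsimp only; omega)⟩

lemma exists_ne_mem_pairsAtDist_one_or_pred {n : ℕ} (hn : 3 ≤ n) (v : Fin n) :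
    ∃ a b, a ≠ b ∧ s(v, a) ∈ pairsAtDist n 1 ∪ pairsAtDist n (n - 1) ∧
      s(v, b) ∈ pairsAtDist n 1 ∪ pairsAtDist n (n - 1) := by
  simp only [Finset.mem_union, mem_pairsAtDist, ne_eq, Fin.ext_iff]
  by_cases hfirst : (v : ℕ) = 0
  · refine ⟨⟨1, by omega⟩, ⟨n - 1, by omega⟩, ?_⟩
    dsimp only; omega
  by_cases hlast : (v : ℕ) = n - 1
  · refine ⟨⟨0, by omega⟩, ⟨v - 1, by omega⟩, ?_⟩
    dsimp only; omega
  · refine ⟨⟨v - 1, by omega⟩, ⟨v + 1, by omega⟩, ?_⟩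
    dsimp only; omega

/-- The pairs added to the path `0, 1, …, n - 1`: those at distance `⌊n / 2⌋`, and the pair of its
two ends, encoded as the only pair at distance `n - 1`. -/
def augmentingPairs (n : ℕ) : Finset (Sym2 (Fin n)) :=
  pairsAtDist n (n / 2) ∪ pairsAtDist n (n - 1)

lemma card_augmentingPairs {n : ℕ} (hn : 3 ≤ n) : (augmentingPairs n).card = (n + 2 + 1) / 2 := by
  rw [augmentingPairs, Finset.card_union_of_disjoint (disjoint_pairsAtDist (by omega)),
    card_pairsAtDist, card_pairsAtDist]
  omega

lemma not_isDiag_of_mem_augmentingPairs {n : ℕ} (hn : 2 ≤ n) {e : Sym2 (Fin n)}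
    (he : e ∈ augmentingPairs n) : ¬ e.IsDiag := by
  induction e with | _ a b
  rw [augmentingPairs, Finset.mem_union, mem_pairsAtDist, mem_pairsAtDist] at he
  rw [Sym2.mk_isDiag_iff, Fin.ext_iff]
  omega

lemma notMem_edgeSet_pathGraph_of_mem_augmentingPairs {n : ℕ} (hn : 4 ≤ n) {e : Sym2 (Fin n)}
    (he : e ∈ augmentingPairs n) : e ∉ (pathGraph n).edgeSet := by
  induction e with | _ a b
  rw [augmentingPairs, Finset.mem_union, mem_pairsAtDist, mem_pairsAtDist] at he
  rw [mem_edgeSet, pathGraph_adj]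
  omega

/-- The path `0, 1, …, n - 1` together with its `augmentingPairs`, that is, the cycle on
`0, 1, …, n - 1` together with all pairs at distance `⌊n / 2⌋`. -/
def augmentedPath (n : ℕ) : SimpleGraph (Fin n) :=
  pathGraph n ⊔ fromEdgeSet (augmentingPairs n)

lemma augmentedPath_adj {n : ℕ} (hn : 2 ≤ n) {a b : Fin n} :
    (augmentedPath n).Adj a b ↔
      s(a, b) ∈ pairsAtDist n (n / 2) ∨ s(a, b) ∈ pairsAtDist n 1 ∪ pairsAtDist n (n - 1) := by
  have hne : s(a, b) ∈ augmentingPairs n → a ≠ b := not_isDiag_of_mem_augmentingPairs hn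
  rw [augmentedPath, sup_adj, fromEdgeSet_adj, Finset.mem_coe, and_iff_left_of_imp hne,
    pathGraph_adj, ← mem_pairsAtDist, augmentingPairs, Finset.mem_union, Finset.mem_union,
    or_left_comm]

lemma three_le_degN_augmentedPath {n : ℕ} (hn : 4 ≤ n) (v : Fin n) :
    3 ≤ degN (augmentedPath n) v := by
  obtain ⟨w, hw⟩ := exists_mem_pairsAtDist (Nat.mul_div_le n 2) v
  obtain ⟨a, b, hab, ha, hb⟩ := exists_ne_mem_pairsAtDist_one_or_pred (by omega) v
  have hdisj : Disjoint (pairsAtDist n (n / 2)) (pairsAtDist n 1 ∪ pairsAtDist n (n - 1)) :=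
    Finset.disjoint_union_right.2
      ⟨disjoint_pairsAtDist (by omega), disjoint_pairsAtDist (by omega)⟩
  have hne {c : Fin n} (hc : s(v, c) ∈ pairsAtDist n 1 ∪ pairsAtDist n (n - 1)) : w ≠ c := by
    rintro rfl
    exact Finset.disjoint_left.1 hdisj hw hc
  have hadj {c : Fin n} := (augmentedPath_adj (a := v) (b := c) (by omega)).2
  exact three_le_degN (hadj (Or.inl hw)) (hadj (Or.inr ha)) (hadj (Or.inr hb)) (hne ha) (hne hb) hab

end Chords

/-- For every path graph `P` on `n ≥ 4` vertices there is an augmenting set of exactly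
`⌈(n+2)/2⌉` non-edges whose addition gives every vertex degree at least 3. -/
theorem path_augmentation_min_degree_three
    {V : Type*} [Fintype V] (P : SimpleGraph V) (hP : P.IsTree)
    (hpath : ∀ v : V, degN P v ≤ 2)
    (hn : 4 ≤ Fintype.card V) :
    ∃ F : Finset (Sym2 V),
      (∀ e ∈ F, ¬ e.IsDiag ∧ e ∉ P.edgeSet) ∧
      F.card = (Fintype.card V + 2 + 1) / 2 ∧
      ∀ v : V, 3 ≤ degN (P ⊔ SimpleGraph.fromEdgeSet (F : Set (Sym2 V))) v := by
  classical
  obtain ⟨φ⟩ := nonempty_pathGraph_iso_of_isTree hP hpath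
  refine ⟨(augmentingPairs _).image (Sym2.map φ), ?nonedge, ?card, ?degree⟩
  case nonedge =>
    simp only [Finset.forall_mem_image, Sym2.isDiag_map φ.injective, φ.map_mem_edgeSet_iff]
    exact fun e he ↦ ⟨not_isDiag_of_mem_augmentingPairs (by omega) he,
      notMem_edgeSet_pathGraph_of_mem_augmentingPairs hn he⟩
  case card =>
    rw [Finset.card_image_of_injective _ (Sym2.map.injective φ.injective),
      card_augmentingPairs (by omega)]
  case degree =>
    intro v
    obtain ⟨i, rfl⟩ := φ.surjective v
    rw [Finset.coe_image, degN_sup_fromEdgeSet_image]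
    exact three_le_degN_augmentedPath hn i
end

section
/- Let T be a finite tree on n ≥ 4 vertices with maximum degree at least 3, and let l1 and l2 denote the number of vertices of T of degree 1 and of degree 2, respectively. Then there exists a set F of exactly ⌈(2·l1 + l2)/2⌉ unordered pairs of distinct vertices of T that are not edges of T such that every vertex of the graph T + F has degree at least 3. -/
section Degree

open SimpleGraph

variable {V : Type*} {G H : SimpleGraph V} {a b x y : V}

lemma degN_eq_degree (G : SimpleGraph V) (v : V) [Fintype (G.neighborSet v)] :
    degN G v = G.degree v := by
  rw [degN, Set.ncard_eq_toFinset_card', Set.toFinset_card, card_neighborSet_eq_degree]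

lemma degN_eq_zero_iff_isIsolated [Finite V] : degN G a = 0 ↔ G.IsIsolated a := by
  rw [degN, Set.ncard_eq_zero, neighborSet_eq_empty]

lemma sum_degN_eq_two_mul_ncard_edgeSet [Fintype V] (G : SimpleGraph V) :
    ∑ v, degN G v = 2 * G.edgeSet.ncard := by
  classical
  simp only [degN_eq_degree, sum_degrees_eq_twice_card_edges, ← coe_edgeFinset,
    Set.ncard_coe_finset]

lemma degN_sup_of_disjoint [Finite V] (h : Disjoint G H) (v : V) :
    degN (G ⊔ H) v = degN G v + degN H v := by
  rw [degN, neighborSet_sup, Set.ncard_union_eq (disjoint_neighborSet.mpr h v), degN, degN]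

lemma degN_edge [DecidableEq V] (hab : a ≠ b) (v : V) :
    degN (edge a b) v = (if v = a then 1 else 0) + (if v = b then 1 else 0) := by
  have hset : (edge a b).neighborSet v = if v = a then {b} else if v = b then {a} else ∅ := by
    ext w
    grind [mem_neighborSet]
  rw [degN, hset]
  split_ifs with hva hvb
  · exact absurd (hva.symm.trans hvb) hab
  all_goals simp

lemma degN_map_apply {W : Type*} (f : V ↪ W) (v : V) : degN (G.map f) (f v) = degN G v := by
  rw [degN, neighborSet_map, Set.ncard_image_of_injective _ f.injective, degN]

lemma exists_mem_not_adj_of_adj [Finite V] {s : Set V} (hab : G.Adj a b) (hb : b ∉ s)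
    (hs : degN G a ≤ s.ncard) : ∃ x ∈ s, ¬ G.Adj a x := by
  have hlt : (G.neighborSet a).ncard < (insert b s).ncard := by
    rw [Set.ncard_insert_of_notMem hb]
    exact Nat.lt_succ_of_le hs
  obtain ⟨x, hx, hax⟩ := Set.exists_mem_notMem_of_ncard_lt_ncard hlt
  obtain rfl | hx := hx
  · exact absurd hab hax
  · exact ⟨x, hx, hax⟩

lemma eq_of_adj_of_degN_eq_one (ha : degN G a = 1) (hx : G.Adj a x) (hy : G.Adj a y) : x = y := by
  obtain ⟨z, hz⟩ := Set.ncard_eq_one.mp ha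
  rw [← mem_neighborSet, hz, Set.mem_singleton_iff] at hx hy
  rw [hx, hy]

lemma isIndepSet_setOf_degN_eq_one [Fintype V] (hG : G.Preconnected) (hV : 3 ≤ Fintype.card V) :
    G.IsIndepSet {v | degN G v = 1} := by
  classical
  intro u hu v hv _ huv
  obtain ⟨z, -, hz⟩ := Finset.exists_mem_notMem_of_card_lt_card
    (Finset.card_le_two.trans_lt hV : ({u, v} : Finset V).card < (Finset.univ : Finset V).card)
  obtain ⟨p⟩ := hG u z
  obtain ⟨d, -, hfst, hsnd⟩ := p.exists_boundary_dart {u, v} (by simp) (by simpa using hz)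
  apply hsnd
  obtain h | h := hfst
  · exact .inr (eq_of_adj_of_degN_eq_one hu (h ▸ d.adj) huv)
  · exact .inl (eq_of_adj_of_degN_eq_one hv (h ▸ d.adj) huv.symm)

lemma degN_le_card_filter_degN_eq_one [Fintype V] (hG : G.IsTree) (w : V) :
    degN G w ≤ (Finset.univ.filter (fun v => degN G v = 1)).card := by
  classical
  have hle (v : V) : 2 + (if v = w then degN G w else 0) ≤
      degN G v + (if degN G v = 1 then 1 else 0) + (if v = w then 2 else 0) := by
    obtain rfl | hvw := eq_or_ne v w
    · simp only [if_true]
      omega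
    · have : Nontrivial V := ⟨v, w, hvw⟩
      have hv : degN G v ≠ 0 :=
        degN_eq_zero_iff_isIsolated.not.mpr (hG.connected.preconnected.not_isIsolated v)
      simp only [if_neg hvw]
      split_ifs <;> omega
  have hsum := Finset.sum_le_sum fun v (_ : v ∈ Finset.univ) => hle v
  simp only [Finset.sum_add_distrib, Finset.sum_const, Finset.card_univ, smul_eq_mul,
    Finset.sum_ite_eq', Finset.mem_univ, if_true, ← Finset.card_filter,
    sum_degN_eq_two_mul_ncard_edgeSet] at hsum
  have hedges : G.edgeSet.ncard + 1 = Fintype.card V := by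
    rw [← hG.card_edgeFinset, ← coe_edgeFinset, Set.ncard_coe_finset]
  omega

end Degree

section Augmentation

open SimpleGraph

variable {V : Type*} {G H : SimpleGraph V} {a b x y : V}

lemma exists_degN_eq_two_of_three_le_card [DecidableEq V] {L : Finset V} (hL : 3 ≤ L.card) :
    ∃ H : SimpleGraph V, ∀ v, degN H v = if v ∈ L then 2 else 0 := by
  obtain ⟨n, hn⟩ := Nat.exists_eq_add_of_le' hL
  let f : Fin (n + 3) ↪ V := (L.equivFinOfCardEq hn).symm.toEmbedding.trans (.subtype _)
  refine ⟨(cycleGraph (n + 3)).map f, fun v => ?_⟩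
  split_ifs with hv
  · have hfv : f (L.equivFinOfCardEq hn ⟨v, hv⟩) = v := by simp [f]
    rw [← hfv, degN_map_apply, degN_eq_degree, cycleGraph_degree_three_le]
  · have hempty : ((cycleGraph (n + 3)).map f).neighborSet v = ∅ := by
      refine Set.eq_empty_of_forall_notMem ?_
      rintro - ⟨-, i, -, -, rfl, -⟩
      exact hv (by simp [f])
    rw [degN, hempty, Set.ncard_empty]

lemma degN_sdiff_sup_edge_sup_edge [Finite V] (hxy : H.Adj x y) (hab : a ≠ b)
    (ha : H.IsIsolated a) (hb : H.IsIsolated b) (v : V) :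
    degN (H \ edge x y ⊔ edge a x ⊔ edge b y) v = degN H v + degN (edge a b) v := by
  classical
  have hax : a ≠ x := by rintro rfl; exact ha _ hxy
  have hby : b ≠ y := by rintro rfl; exact hb _ hxy.symm
  have hbx : b ≠ x := by rintro rfl; exact hb _ hxy
  have hdisj_ax : Disjoint (H \ edge x y) (edge a x) := (disjoint_edge _).mpr fun h => ha _ h.1
  have hdisj_by : Disjoint (H \ edge x y ⊔ edge a x) (edge b y) := by
    refine (disjoint_edge _).mpr ?_
    rintro (h | h)
    · exact hb _ h.1
    · grind
  have hH : degN H v = degN (H \ edge x y) v + degN (edge x y) v := by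
    rw [← degN_sup_of_disjoint disjoint_sdiff_self_left,
      sdiff_sup_cancel ((edge_le_iff _).mpr (.inr hxy))]
  rw [degN_sup_of_disjoint hdisj_by, degN_sup_of_disjoint hdisj_ax, hH, degN_edge hax,
    degN_edge hby, degN_edge hab, degN_edge hxy.ne]
  ring

lemma exists_disjoint_degN_eq_add_degN_edge [Finite V] (hGH : Disjoint G H)
    (hH : 2 ≤ {u | 2 ≤ degN H u}.ncard) (hab : a ≠ b) (hGa : degN G a ≤ 2) (hGb : degN G b ≤ 2)
    (ha : H.IsIsolated a) (hb : H.IsIsolated b) :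
    ∃ H', Disjoint G H' ∧ ∀ v, degN H' v = degN H v + degN (edge a b) v := by
  by_cases hadj : G.Adj a b
  · have hb_notMem : b ∉ {u | 2 ≤ degN H u} := by
      simp [degN_eq_zero_iff_isIsolated.mpr hb]
    obtain ⟨x, hx, hax⟩ := exists_mem_not_adj_of_adj hadj hb_notMem (hGa.trans hH)
    obtain ⟨y, hxy, hby⟩ := exists_mem_not_adj_of_adj hadj.symm
      (fun h : H.Adj x a => ha _ h.symm) (hGb.trans hx)
    refine ⟨H \ edge x y ⊔ edge a x ⊔ edge b y, ?_, degN_sdiff_sup_edge_sup_edge hxy hab ha hb⟩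
    rw [disjoint_sup_right, disjoint_sup_right, disjoint_edge, disjoint_edge]
    exact ⟨⟨hGH.mono_right sdiff_le, hax⟩, hby⟩
  · exact ⟨H ⊔ edge a b, disjoint_sup_right.mpr ⟨hGH, (disjoint_edge _).mpr hadj⟩,
      degN_sup_of_disjoint ((disjoint_edge _).mpr (ha b))⟩

lemma exists_disjoint_degN_eq_add_of_even_card [Finite V] [DecidableEq V] (hGH : Disjoint G H)
    (hH : 2 ≤ {u | 2 ≤ degN H u}.ncard) {S : Finset V} (hS : Even S.card)
    (hGS : ∀ v ∈ S, degN G v ≤ 2) (hHS : ∀ v ∈ S, H.IsIsolated v) :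
    ∃ H', Disjoint G H' ∧ ∀ v, degN H' v = degN H v + if v ∈ S then 1 else 0 := by
  obtain ⟨k, hk⟩ := hS
  induction k generalizing S with
  | zero =>
    obtain rfl : S = ∅ := by simpa using hk
    exact ⟨H, hGH, by simp⟩
  | succ k ih =>
    obtain ⟨a, A, haA, rfl, hA⟩ := Finset.card_eq_succ.mp (show S.card = (k + k + 1) + 1 by omega)
    obtain ⟨b, B, hbB, rfl, hB⟩ := Finset.card_eq_succ.mp hA
    simp only [Finset.mem_insert, not_or, forall_eq_or_imp] at haA hGS hHS
    obtain ⟨H₁, hGH₁, hH₁⟩ := ih hGS.2.2 hHS.2.2 hB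
    have hisolated {v : V} (hv : H.IsIsolated v) (hvB : v ∉ B) : H₁.IsIsolated v := by
      rw [← degN_eq_zero_iff_isIsolated, hH₁, degN_eq_zero_iff_isIsolated.mpr hv, if_neg hvB]
    have hmono : {u | 2 ≤ degN H u} ⊆ {u | 2 ≤ degN H₁ u} := fun u hu =>
      le_trans hu ((Nat.le_add_right _ _).trans_eq (hH₁ u).symm)
    obtain ⟨H₂, hGH₂, hH₂⟩ := exists_disjoint_degN_eq_add_degN_edge hGH₁
      (hH.trans (Set.ncard_le_ncard hmono)) haA.1 hGS.1 hGS.2.1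
      (hisolated hHS.1 haA.2) (hisolated hHS.2.1 hbB)
    refine ⟨H₂, hGH₂, fun v => ?_⟩
    rw [hH₂, hH₁, degN_edge haA.1]
    grind

lemma exists_disjoint_degN_eq_of_even_card [Finite V] [DecidableEq V] {L S : Finset V}
    (hLindep : G.IsIndepSet (L : Set V)) (hL : 3 ≤ L.card) (hLS : Disjoint L S) (hS : Even S.card)
    (hGS : ∀ v ∈ S, degN G v ≤ 2) :
    ∃ H, Disjoint G H ∧
      ∀ v, degN H v = (if v ∈ L then 2 else 0) + if v ∈ S then 1 else 0 := by
  obtain ⟨H, hH⟩ := exists_degN_eq_two_of_three_le_card hL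
  have hisolated {v : V} (hv : v ∉ L) : H.IsIsolated v := by
    rw [← degN_eq_zero_iff_isIsolated, hH, if_neg hv]
  have hadj_mem {u v : V} (huv : H.Adj u v) : u ∈ L := by
    by_contra hu
    exact hisolated hu v huv
  have hGH : Disjoint G H := by
    refine disjoint_neighborSet.mp fun u => Set.disjoint_left.mpr fun v hG hH => ?_
    exact hLindep (hadj_mem hH) (hadj_mem hH.symm) hG.ne hG
  have htwo : {u | 2 ≤ degN H u} = L := by
    ext u
    by_cases hu : u ∈ L <;> simp [hH, hu]
  obtain ⟨H', hGH', hH'⟩ := exists_disjoint_degN_eq_add_of_even_card hGH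
    (by rw [htwo, Set.ncard_coe_finset]; omega) hS hGS
    fun v hv => hisolated (Finset.disjoint_right.mp hLS hv)
  exact ⟨H', hGH', fun v => by rw [hH', hH]⟩

lemma two_mul_ncard_edgeSet_of_degN_eq [Finite V] [DecidableEq V] {L S : Finset V}
    (hH : ∀ v, degN H v = (if v ∈ L then 2 else 0) + if v ∈ S then 1 else 0) :
    2 * H.edgeSet.ncard = 2 * L.card + S.card := by
  have := Fintype.ofFinite V
  rw [← sum_degN_eq_two_mul_ncard_edgeSet]
  simp only [hH, Finset.sum_add_distrib, Finset.sum_ite_mem, Finset.univ_inter, Finset.sum_const,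
    smul_eq_mul, mul_one, mul_comm]

lemma exists_disjoint_le_degN [Finite V] [DecidableEq V] {L S : Finset V}
    (hLindep : G.IsIndepSet (L : Set V)) (hL : 3 ≤ L.card) (hLS : Disjoint L S)
    (hGS : ∀ v ∈ S, degN G v ≤ 2) :
    ∃ H, Disjoint G H ∧ H.edgeSet.ncard = (2 * L.card + S.card + 1) / 2 ∧
      ∀ v, (if v ∈ L then 2 else 0) + (if v ∈ S then 1 else 0) ≤ degN H v := by
  obtain hS | hS := Nat.even_or_odd S.card
  · obtain ⟨H, hGH, hH⟩ := exists_disjoint_degN_eq_of_even_card hLindep hL hLS hS hGS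
    have hcard := two_mul_ncard_edgeSet_of_degN_eq hH
    exact ⟨H, hGH, by omega, fun v => (hH v).ge⟩
  · obtain ⟨d, hd⟩ := Finset.card_pos.mp hS.pos
    have hdL : d ∉ L := Finset.disjoint_right.mp hLS hd
    obtain ⟨p, hpL, hdp⟩ : ∃ p ∈ (L : Set V), ¬ G.Adj d p :=
      Set.exists_mem_notMem_of_ncard_lt_ncard <| by
        rw [Set.ncard_coe_finset]
        exact (hGS d hd).trans_lt hL
    have hcard_erase : (S.erase d).card + 1 = S.card := Finset.card_erase_add_one hd
    obtain ⟨H, hGH, hH⟩ := exists_disjoint_degN_eq_of_even_card hLindep hL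
      (hLS.mono_right (S.erase_subset d)) (by grind)
      fun v hv => hGS v (Finset.mem_of_mem_erase hv)
    have hcard := two_mul_ncard_edgeSet_of_degN_eq hH
    have hdne : d ≠ p := fun h => hdL (h ▸ hpL)
    have hisolated : H.IsIsolated d := by
      rw [← degN_eq_zero_iff_isIsolated, hH, if_neg hdL, if_neg (S.notMem_erase d)]
    have hdisj : Disjoint H (edge d p) := (disjoint_edge _).mpr (hisolated p)
    refine ⟨H ⊔ edge d p, disjoint_sup_right.mpr ⟨hGH, (disjoint_edge _).mpr hdp⟩, ?_, fun v => ?_⟩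
    · rw [edgeSet_sup, Set.ncard_union_eq (disjoint_edgeSet.mpr hdisj), edgeSet_edge_of_ne hdne,
        Set.ncard_singleton]
      omega
    · rw [degN_sup_of_disjoint hdisj, hH, degN_edge hdne]
      grind

end Augmentation

theorem nonpath_augmentation_min_degree_three_general
    {V : Type*} [Fintype V] (G : SimpleGraph V) (hpos : ∀ v, ¬ G.IsIsolated v)
    (hindep : G.IsIndepSet {v | degN G v = 1})
    (hleaves : 3 ≤ (Finset.univ.filter (fun v => degN G v = 1)).card) :
    ∃ F : Finset (Sym2 V),
      (∀ e ∈ F, ¬ e.IsDiag ∧ e ∉ G.edgeSet) ∧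
      F.card = (2 * (Finset.univ.filter (fun v => degN G v = 1)).card
          + (Finset.univ.filter (fun v => degN G v = 2)).card + 1) / 2 ∧
      ∀ v : V, 3 ≤ degN (G ⊔ SimpleGraph.fromEdgeSet (F : Set (Sym2 V))) v := by
  classical
  obtain ⟨H, hGH, hcard, hdeg⟩ := exists_disjoint_le_degN (by simpa using hindep) hleaves
    (S := Finset.univ.filter (fun v => degN G v = 2))
    (Finset.disjoint_filter.mpr (by omega)) (by simp +contextual)
  refine ⟨H.edgeFinset, fun e he => ?_, ?_, fun v => ?_⟩
  · rw [SimpleGraph.mem_edgeFinset] at he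
    exact ⟨H.not_isDiag_of_mem_edgeSet he,
      (SimpleGraph.disjoint_edgeSet.mpr hGH).notMem_of_mem_right he⟩
  · rw [← hcard, ← SimpleGraph.coe_edgeFinset, Set.ncard_coe_finset]
  · have hGv : degN G v ≠ 0 := degN_eq_zero_iff_isIsolated.not.mpr (hpos v)
    have hHv := hdeg v
    simp only [Finset.mem_filter, Finset.mem_univ, true_and] at hHv
    rw [SimpleGraph.coe_edgeFinset, SimpleGraph.fromEdgeSet_edgeSet, degN_sup_of_disjoint hGH]
    split_ifs at hHv <;> omega

/-- For every tree `T` on `n ≥ 4` vertices with maximum degree at least 3 there is an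
augmenting set of exactly `⌈(2·l₁ + l₂)/2⌉` non-edges whose addition gives every
vertex degree at least 3. -/
theorem nonpath_augmentation_min_degree_three
    {V : Type*} [Fintype V] (T : SimpleGraph V) (hT : T.IsTree)
    (hn : 4 ≤ Fintype.card V)
    (hdeg3 : ∃ v : V, 3 ≤ degN T v) :
    ∃ F : Finset (Sym2 V),
      (∀ e ∈ F, ¬ e.IsDiag ∧ e ∉ T.edgeSet) ∧
      F.card = (2 * (Finset.univ.filter (fun v => degN T v = 1)).card
          + (Finset.univ.filter (fun v => degN T v = 2)).card + 1) / 2 ∧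
      ∀ v : V, 3 ≤ degN (T ⊔ SimpleGraph.fromEdgeSet (F : Set (Sym2 V))) v := by
  have : Nontrivial V := Fintype.one_lt_card_iff_nontrivial.mp (by omega)
  obtain ⟨w, hw⟩ := hdeg3
  exact nonpath_augmentation_min_degree_three_general T hT.connected.preconnected.not_isIsolated
    (isIndepSet_setOf_degN_eq_one hT.connected.preconnected (by omega))
    (hw.trans (degN_le_card_filter_degN_eq_one hT w))
end

section
/- Let T be a finite tree on n ≥ 4 vertices, and let l1 and l2 denote the number of vertices of T of degree 1 and of degree 2, respectively. Then there exists a set F of exactly ⌈(2·l1 + l2)/2⌉ unordered pairs of distinct vertices of T that are not edges of T such that the graph T + F is 3-vertex-connected. -/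
/-!
Root the tree at a leaf and number its vertices `0, …, n - 1` in depth-first preorder, that is, by
the lexicographic order of the paths from the root. Every vertex that is not a leaf is then followed
immediately by its first child, and `0` and `n - 1` are leaves. Add two kinds of edges.

* Spine edges join leaves that are consecutive in preorder; there are `l₁ - 1` of them.
* Hook edges. The hooks `q 0 = 0 < … < q (L - 1) = n - 1` are the two extreme leaves and the `l₂`
  vertices of degree two, so `L = l₂ + 2`. Join `q i` to `q (i + ⌊L / 2⌋)` wherever this makes
  sense, which gives `⌈L / 2⌉` edges. For `l₂ = 1` use instead `{0, n - 1}` and an edge from the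
  vertex of degree two to `0` or `n - 1`.

In total these are `l₁ - 1 + ⌈(l₂ + 2) / 2⌉ = ⌈(2 l₁ + l₂) / 2⌉` edges. Only two properties of the
hook edges matter: some hook edge leads from any run of vertices of degree two to a vertex outside
the run and its two tree neighbours, and every vertex but `0` and `n - 1` lies, in preorder,
strictly between the ends of some hook edge.

For 3-connectedness, delete `s` and `t` and consider a 2-colouring that is constant along all
surviving edges; it has to be constant.

* If all surviving leaves have one colour, the first vertex of the other colour starts a run of
  vertices of degree two which is enclosed by `s` and `t`, and a hook edge leaving the run is a
  contradiction. This settles the case that no leaf is deleted, since the spine is then intact.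
* If both `s` and `t` are leaves, the rest of the tree is connected anyway.
* If `s` is a leaf and `t` is not, the spine falls into at most two pieces. If these had different
  colours, all survivors before some place would have one colour and all later ones the other, and
  a hook edge straddling that place is a contradiction.
-/

open Finset Function

/-! ### Cut colourings -/

/-- A 2-colouring `c` of the vertices that is constant along the edges of `G` surviving the deletion
of `s` and `t`. The colours of `s` and `t` are irrelevant. -/
def IsCutColoring {W : Type*} (G : SimpleGraph W) (s t : W) (c : W → Prop) : Prop :=
  ∀ ⦃x y⦄, G.Adj x y → x ≠ s → x ≠ t → y ≠ s → y ≠ t → (c x ↔ c y)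

theorem IsCutColoring.symm {W : Type*} {G : SimpleGraph W} {s t : W} {c : W → Prop}
    (hc : IsCutColoring G s t c) : IsCutColoring G t s c :=
  fun _ _ hxy hxt hxs hyt hys => hc hxy hxs hxt hys hyt

section ThreeConnected

variable {V : Type*} [Fintype V]

theorem threeConnected_of_isCutColoring {G : SimpleGraph V} (hV : 4 ≤ Fintype.card V)
    (hG : ∀ s t c, IsCutColoring G s t c →
      ∀ x y, x ≠ s → x ≠ t → y ≠ s → y ≠ t → (c x ↔ c y)) :
    ThreeConnected G := by
  classical
  intro S hS
  obtain ⟨v, -, hv⟩ := exists_mem_notMem_of_card_lt_card (s := S) (t := univ)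
    (by rw [card_univ]; omega)
  refine SimpleGraph.connected_iff _ |>.2 ⟨?_, ⟨v, by simpa using hv⟩⟩
  rintro ⟨u, hu⟩ ⟨v, hv⟩
  rw [Set.mem_compl_iff, mem_coe] at hu hv
  -- Fewer than two deleted vertices are harmless: delete further ones, but neither `u` nor `v`.
  obtain ⟨S', hSS', hS'uv, hS'⟩ : ∃ S' : Finset V, S ⊆ S' ∧ S' ⊆ ({u, v} : Finset V)ᶜ ∧
      S'.card = 2 := by
    refine exists_subsuperset_card_eq (fun x hx => ?_) hS ?_
    · simp only [mem_compl, mem_insert, mem_singleton]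
      rintro (rfl | rfl) <;> contradiction
    · have : ({u, v} : Finset V).card ≤ 2 := card_le_two
      rw [card_compl]
      omega
  obtain ⟨s, t, -, rfl⟩ := card_eq_two.1 hS'
  simp only [insert_subset_iff, singleton_subset_iff, mem_compl, mem_insert, mem_singleton,
    not_or] at hS'uv
  have hmem : ∀ w, w ≠ s → w ≠ t → w ∈ (S : Set V)ᶜ := fun w hws hwt hw => by
    have := hSS' (mem_coe.1 hw)
    simp_all
  let c : V → Prop := fun w => ∃ hw, (G.induce (S : Set V)ᶜ).Reachable ⟨u, hu⟩ ⟨w, hw⟩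
  have hadj : ∀ x y, G.Adj x y → y ≠ s → y ≠ t → c x → c y :=
    fun x y hxy hys hyt ⟨hx, hr⟩ =>
      ⟨hmem y hys hyt, hr.trans (SimpleGraph.Adj.reachable (SimpleGraph.induce_adj.2 hxy))⟩
  have hc : IsCutColoring G s t c := fun x y hxy hxs hxt hys hyt =>
    ⟨hadj x y hxy hys hyt, hadj y x hxy.symm hxs hxt⟩
  exact ((hG s t c hc u v (by tauto) (by tauto) (by tauto) (by tauto)).1
    ⟨hu, SimpleGraph.Reachable.refl _⟩).2

theorem exists_apply_eq_iff_lt_card {pos : V ↪ ℕ} (hpos : univ.map pos = range (Fintype.card V))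
    {x : ℕ} : (∃ v, pos v = x) ↔ x < Fintype.card V := by
  rw [← mem_range, ← hpos]
  simp

theorem threeConnected_comap {G : SimpleGraph ℕ} {pos : V ↪ ℕ} (hV : 4 ≤ Fintype.card V)
    (hpos : univ.map pos = range (Fintype.card V))
    (hG : ∀ x y, G.Adj x y → x < Fintype.card V)
    (hconst : ∀ s t c, s < Fintype.card V → t < Fintype.card V → IsCutColoring G s t c →
      ∀ x y, x < Fintype.card V → y < Fintype.card V →
        x ≠ s → x ≠ t → y ≠ s → y ≠ t → (c x ↔ c y)) :
    ThreeConnected (G.comap pos) := by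
  have hlt : ∀ v, pos v < Fintype.card V := fun v => (exists_apply_eq_iff_lt_card hpos).1 ⟨v, rfl⟩
  refine threeConnected_of_isCutColoring hV fun s t c hc u v => ?_
  have hc' : IsCutColoring G (pos s) (pos t) fun x => ∃ w, pos w = x ∧ c w := by
    intro x y hxy hxs hxt hys hyt
    obtain ⟨x, rfl⟩ := (exists_apply_eq_iff_lt_card hpos).2 (hG x y hxy)
    obtain ⟨y, rfl⟩ := (exists_apply_eq_iff_lt_card hpos).2 (hG y _ hxy.symm)
    simpa using hc (x := x) (y := y) hxy (by simpa using hxs) (by simpa using hxt)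
      (by simpa using hys) (by simpa using hyt)
  simpa using hconst _ _ _ (hlt s) (hlt t) hc' (pos u) (pos v) (hlt u) (hlt v)

end ThreeConnected

/-! ### Parent arrays -/

/-- The parent map `par` of a tree on `n` vertices that is rooted at a leaf and whose vertices are
numbered `0, …, n - 1` in depth-first preorder. The preorder condition `nested` says that a vertex
`i` visited between the vertex `par j` and its child `j` lies below `par j`, and `root` says that
the root `0` has no child but `1`. The value of `par` at `0` and at `i ≥ n` is irrelevant. -/
structure IsPreorderParent (n : ℕ) (par : ℕ → ℕ) : Prop where
  par_lt : ∀ ⦃i⦄, 0 < i → i < n → par i < i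
  nested : ∀ ⦃i j⦄, par j < i → i ≤ j → j < n → par j ≤ par i
  root : ∀ ⦃i⦄, 1 < i → i < n → par i ≠ 0

section ParentArray

variable (n : ℕ) (par : ℕ → ℕ)

/-- The tree on `0, …, n - 1` given by the parent map `par`, as a graph on `ℕ`. -/
def parentGraph : SimpleGraph ℕ :=
  SimpleGraph.fromRel fun i j => 0 < j ∧ j < n ∧ par j = i

/-- The vertices whose parent is `i`. -/
def children (i : ℕ) : Finset ℕ := {j ∈ range n | 0 < j ∧ par j = i}

/-- The vertices of degree one, where the root `0` is presumed to have just one child. -/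
def leaves : Finset ℕ := {i ∈ range n | i = 0 ∨ children n par i = ∅}

/-- The vertices of degree two, where the root `0` is presumed to have just one child. In preorder
the only child of `i` can only be `i + 1`. -/
def degTwo : Finset ℕ := {i ∈ range n | 0 < i ∧ children n par i = {i + 1}}

end ParentArray

variable {n : ℕ} {par : ℕ → ℕ} {i j : ℕ}

theorem mem_children : j ∈ children n par i ↔ 0 < j ∧ j < n ∧ par j = i := by
  simp only [children, mem_filter, mem_range]
  tauto

theorem mem_leaves :
    i ∈ leaves n par ↔ i < n ∧ (i = 0 ∨ ∀ j, 0 < j → j < n → par j ≠ i) := by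
  simp only [leaves, mem_filter, mem_range, eq_empty_iff_forall_notMem, mem_children, not_and]

theorem mem_degTwo :
    i ∈ degTwo n par ↔ 0 < i ∧ ∀ j, (0 < j ∧ j < n ∧ par j = i) ↔ j = i + 1 := by
  simp only [degTwo, mem_filter, mem_range, Finset.ext_iff, mem_children, mem_singleton]
  refine ⟨And.right, fun h => ⟨?_, h⟩⟩
  have := (h.2 (i + 1)).2 rfl
  omega

theorem notMem_leaves_of_mem_degTwo (hi : i ∈ degTwo n par) : i ∉ leaves n par := by
  rw [mem_degTwo] at hi
  rw [mem_leaves]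
  have := (hi.2 (i + 1)).2 rfl
  rintro ⟨-, rfl | hl⟩
  · omega
  · exact hl (i + 1) this.1 this.2.1 this.2.2

theorem zero_mem_leaves (hn : 0 < n) : 0 ∈ leaves n par :=
  mem_leaves.2 ⟨hn, Or.inl rfl⟩

theorem par_notMem_leaves (hj : 0 < j) (hjn : j < n) (h0 : par j ≠ 0) : par j ∉ leaves n par :=
  fun h => (mem_leaves.1 h).2.elim h0 fun h => h j hj hjn rfl

namespace IsPreorderParent

theorem par_one (h : IsPreorderParent n par) (hn : 1 < n) : par 1 = 0 := by
  have := h.par_lt one_pos hn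
  omega

theorem last_mem_leaves (h : IsPreorderParent n par) (hn : 0 < n) : n - 1 ∈ leaves n par := by
  refine mem_leaves.2 ⟨by omega, Or.inr fun j h0 hj hp => ?_⟩
  have := h.par_lt h0 hj
  omega

theorem succ_mem_children (h : IsPreorderParent n par) (hj : j ∈ children n par i) :
    i + 1 ∈ children n par i ∧ i + 1 ≤ j := by
  rw [mem_children] at hj ⊢
  have h1 := h.par_lt hj.1 hj.2.1
  have h2 := h.nested (i := i + 1) (j := j) (by omega) (by omega) (by omega)
  have h3 := h.par_lt (i := i + 1) (by omega) (by omega)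
  omega

theorem par_succ_of_notMem_leaves (h : IsPreorderParent n par) (hi : i < n)
    (hl : i ∉ leaves n par) : 0 < i ∧ i + 1 < n ∧ par (i + 1) = i := by
  rw [mem_leaves] at hl
  push Not at hl
  obtain ⟨h0, j, hj⟩ := hl hi
  have := mem_children.1 (h.succ_mem_children (mem_children.2 hj)).1
  omega

theorem parentGraph_adj (h : IsPreorderParent n par) {x y : ℕ} :
    (parentGraph n par).Adj x y ↔ x ∈ children n par y ∨ y ∈ children n par x := by
  simp only [parentGraph, SimpleGraph.fromRel_adj, mem_children]
  refine ⟨by tauto, fun hxy => ⟨?_, by tauto⟩⟩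
  rintro rfl
  rcases hxy with hx | hx <;> have := h.par_lt hx.1 hx.2.1 <;> omega

theorem lt_of_parentGraph_adj (h : IsPreorderParent n par) {x y : ℕ}
    (hxy : (parentGraph n par).Adj x y) : x < n := by
  rw [h.parentGraph_adj, mem_children, mem_children] at hxy
  have := h.par_lt (i := y)
  omega

theorem neighborSet_parentGraph_zero (h : IsPreorderParent n par) (hn : 1 < n) :
    (parentGraph n par).neighborSet 0 = {1} := by
  ext j
  rw [SimpleGraph.mem_neighborSet, h.parentGraph_adj, mem_children, mem_children,
    Set.mem_singleton_iff]
  refine ⟨fun hj => ?_, ?_⟩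
  · by_contra hj1
    exact h.root (i := j) (by omega) (by omega) (by omega)
  · rintro rfl
    exact Or.inr ⟨one_pos, hn, h.par_one hn⟩

theorem neighborSet_parentGraph (h : IsPreorderParent n par) (hi0 : 0 < i) (hi : i < n) :
    (parentGraph n par).neighborSet i = ↑(insert (par i) (children n par i)) := by
  ext j
  rw [SimpleGraph.mem_neighborSet, h.parentGraph_adj, coe_insert, Set.mem_insert_iff, mem_coe,
    mem_children (i := j)]
  have := Eq.comm (a := j) (b := par i)
  tauto

theorem degN_parentGraph_zero (h : IsPreorderParent n par) (hn : 1 < n) :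
    degN (parentGraph n par) 0 = 1 := by
  rw [degN, h.neighborSet_parentGraph_zero hn, Set.ncard_singleton]

theorem degN_parentGraph (h : IsPreorderParent n par) (hi0 : 0 < i) (hi : i < n) :
    degN (parentGraph n par) i = (children n par i).card + 1 := by
  rw [degN, h.neighborSet_parentGraph hi0 hi, Set.ncard_coe_finset, card_insert_of_notMem]
  intro hp
  have := (h.succ_mem_children hp).2
  have := h.par_lt hi0 hi
  omega

theorem degN_parentGraph_eq_one_iff (h : IsPreorderParent n par) (hn : 1 < n) (hi : i < n) :
    degN (parentGraph n par) i = 1 ↔ i ∈ leaves n par := by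
  rcases Nat.eq_zero_or_pos i with rfl | hi0
  · simp only [h.degN_parentGraph_zero hn, zero_mem_leaves hi]
  · simp [h.degN_parentGraph hi0 hi, leaves, hi, hi0.ne']

theorem degN_parentGraph_eq_two_iff (h : IsPreorderParent n par) (hn : 1 < n) (hi : i < n) :
    degN (parentGraph n par) i = 2 ↔ i ∈ degTwo n par := by
  rcases Nat.eq_zero_or_pos i with rfl | hi0
  · simp [h.degN_parentGraph_zero hn, degTwo]
  · rw [h.degN_parentGraph hi0 hi, degTwo, mem_filter, mem_range]
    refine ⟨fun hc => ⟨hi, hi0, ?_⟩, fun hc => by rw [hc.2.2, card_singleton]⟩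
    obtain ⟨j, hj⟩ := card_eq_one.1 (Nat.succ_injective hc)
    have := (h.succ_mem_children (hj ▸ mem_singleton_self j)).1
    rw [hj, mem_singleton] at this
    rw [hj, this]

end IsPreorderParent

/-! ### Numbering the tree in preorder -/

section Lex

variable {α : Type*} [LinearOrder α] {l m t : List α}

theorem le_of_prefix (hlm : l <+: m) : l ≤ m :=
  not_lt.1 (List.not_lt.2 hlm.le)

theorem prefix_of_le_of_le_append (hlm : l ≤ m) (hmt : m ≤ l ++ t) : l <+: m := by
  induction l generalizing m with
  | nil => exact List.nil_prefix
  | cons x l ih =>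
    cases m with
    | nil => exact absurd hlm (not_le.2 (List.nil_lt_cons x l))
    | cons y m =>
      rw [← not_lt, List.cons_append, List.cons_lt_cons_iff] at hmt
      rw [← not_lt, List.cons_lt_cons_iff] at hlm
      push Not at hlm hmt
      obtain rfl : x = y := le_antisymm hlm.1 hmt.1
      exact (List.prefix_cons_inj x).2 (ih (hlm.2 rfl) (hmt.2 rfl))

end Lex

theorem exists_rank {V L : Type*} [Fintype V] [LinearOrder L] {f : V → L} (hf : Injective f) :
    ∃ pos : V ↪ ℕ, univ.map pos = range (Fintype.card V) ∧
      ∀ u v, pos u ≤ pos v ↔ f u ≤ f v := by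
  let := LinearOrder.lift' f hf
  let e := (Fintype.orderIsoFinOfCardEq V rfl).symm
  refine ⟨e.toEquiv.toEmbedding.trans Fin.valEmbedding, ?_, fun u v => e.le_iff_le⟩
  rw [← Finset.map_map, Finset.map_univ_equiv, Fin.map_valEmbedding_univ, Nat.Iio_eq_range]

section Numbering

variable {V : Type*} {T : SimpleGraph V}

/-- The code of `v` is the list of the vertices on the path from `a` to `v`. -/
theorem exists_path_code (hT : T.IsTree) (a : V) :
    ∃ code : V → List V, Injective code ∧ (∀ v, code a <+: code v) ∧
      (∀ v, v ≠ a → ∃ u, T.Adj u v ∧ code v = code u ++ [v]) ∧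
      ∀ u v, T.Adj u v → code v = code u ++ [v] ∨ code u = code v ++ [u] := by
  choose P hP _ using hT.existsUnique_path a
  have hlast : ∀ v, (P v).support.getLast? = some v := fun v => by
    rw [List.getLast?_eq_some_getLast (P v).support_ne_nil, SimpleGraph.Walk.getLast_support]
  have hstep : ∀ u v, T.Adj u v → u ∈ (P v).support →
      (P v).support = (P u).support ++ [v] := fun u v huv hu => by
    rw [hT.isAcyclic.path_concat (hP u) (hP v) huv hu, SimpleGraph.Walk.support_concat]
  refine ⟨fun v => (P v).support, fun u v huv => ?_, fun v => ?_, fun v hv => ?_, fun u v huv => ?_⟩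
  · have huv : (P u).support = (P v).support := huv
    exact Option.some_injective _ (by rw [← hlast u, ← hlast v, huv])
  · have hnil : (P a).support = [a] := by
      rw [((P a).isPath_iff_nil.1 (hP a)).eq_nil, SimpleGraph.Walk.support_nil]
    exact ⟨_, (congrArg (· ++ _) hnil).trans (P v).cons_tail_support⟩
  · have hadj := (P v).adj_penultimate (SimpleGraph.Walk.not_nil_of_ne hv.symm)
    exact ⟨_, hadj, hstep _ _ hadj ((P v).getVert_mem_support _)⟩
  · by_cases hu : u ∈ (P v).support
    · exact Or.inl (hstep u v huv hu)
    · exact Or.inr (hstep v u huv.symm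
        (hT.isAcyclic.mem_support_of_ne_mem_support_of_adj_of_isPath (hP u) (hP v) huv hu))

variable [Fintype V]

/-- Rooting `T` at `a` gives `v` the parent `p v`, and `pos` numbers the vertices `0, 1, …` in
depth-first preorder. The value of `p` at `a` is irrelevant. -/
structure IsPreorderNumbering (T : SimpleGraph V) (a : V) (p : V → V) (pos : V ↪ ℕ) : Prop where
  map_univ : univ.map pos = range (Fintype.card V)
  adj : ∀ ⦃v⦄, v ≠ a → T.Adj (p v) v
  eq_of_adj : ∀ ⦃u v⦄, T.Adj u v → (v ≠ a ∧ p v = u) ∨ (u ≠ a ∧ p u = v)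
  root_le : ∀ v, pos a ≤ pos v
  lt : ∀ ⦃v⦄, v ≠ a → pos (p v) < pos v
  nested : ∀ ⦃u v⦄, u ≠ a → v ≠ a → pos (p v) < pos u → pos u ≤ pos v → pos (p v) ≤ pos (p u)

/-- Number the vertices by the lexicographic order of their codes: a code that lies between those
of `p v` and `v` extends that of `p v`. -/
theorem exists_isPreorderNumbering (hT : T.IsTree) (a : V) :
    ∃ p pos, IsPreorderNumbering T a p pos := by
  let := LinearOrder.lift' (Fintype.equivFin V) (Fintype.equivFin V).injective
  obtain ⟨code, hinj, hroot, hparent, hadj⟩ := exists_path_code hT a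
  choose! p hp hcode using hparent
  obtain ⟨pos, hpos, hle⟩ := exists_rank hinj
  have hlt : ∀ u v, pos u < pos v ↔ code u < code v := fun u v => by rw [← not_le, hle, not_le]
  have hchild : ∀ u v, code v = code u ++ [v] → v ≠ a ∧ p v = u := fun u v huv => by
    have hva : v ≠ a := by
      rintro rfl
      have := (hroot u).length_le
      simp [huv] at this
    exact ⟨hva, hinj (List.append_cancel_right ((hcode v hva).symm.trans huv))⟩
  refine ⟨p, pos, hpos, hp, fun u v huv => (hadj u v huv).imp (hchild u v) (hchild v u),
    fun v => (hle _ _).2 (le_of_prefix (hroot v)), fun v hv => ?_, fun u v hu hv hvu huv => ?_⟩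
  · refine lt_of_le_of_ne ((hle _ _).2 (le_of_prefix ⟨[v], (hcode v hv).symm⟩)) fun h => ?_
    exact (hp v hv).ne (pos.injective h)
  · rw [hlt] at hvu
    rw [hle, hcode v hv] at huv
    have hprefix := prefix_of_le_of_le_append hvu.le huv
    rw [hcode u hu, List.prefix_concat_iff, ← hcode u hu] at hprefix
    exact (hle _ _).2 (le_of_prefix (hprefix.resolve_left fun h => hvu.ne h))

namespace IsPreorderNumbering

variable {a : V} {p : V → V} {pos : V ↪ ℕ}

theorem exists_pos_eq_iff (h : IsPreorderNumbering T a p pos) {x : ℕ} :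
    (∃ v, pos v = x) ↔ x < Fintype.card V :=
  exists_apply_eq_iff_lt_card h.map_univ

theorem pos_root (h : IsPreorderNumbering T a p pos) : pos a = 0 := by
  obtain ⟨v, hv⟩ := h.exists_pos_eq_iff.2 (Fintype.card_pos_iff.2 ⟨a⟩)
  exact Nat.le_zero.1 (hv ▸ h.root_le v)

theorem pos_pos_iff (h : IsPreorderNumbering T a p pos) {v : V} : 0 < pos v ↔ v ≠ a := by
  rw [Nat.pos_iff_ne_zero, ← h.pos_root, pos.injective.ne_iff]

theorem pos_le_one (h : IsPreorderNumbering T a p pos) (ha : ∃! b, T.Adj a b) {v : V} (hv : v ≠ a)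
    (hpv : p v = a) : pos v ≤ 1 := by
  by_contra! h1
  obtain ⟨w, hw⟩ := h.exists_pos_eq_iff.2 (h1.trans (h.exists_pos_eq_iff.1 ⟨v, rfl⟩))
  have hwa : w ≠ a := h.pos_pos_iff.1 (by omega)
  have hpw : p w = a := by
    by_contra hpw
    have := h.lt hwa
    have := h.pos_pos_iff.2 hpw
    omega
  have hvw : v = w := ha.unique (hpv ▸ h.adj hv) (hpw ▸ h.adj hwa)
  rw [hvw, hw] at h1
  exact h1.false

theorem isPreorderParent (h : IsPreorderNumbering T a p pos) (ha : ∃! b, T.Adj a b) :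
    IsPreorderParent (Fintype.card V) (extend pos (pos ∘ p) 0) := by
  have hpar : ∀ v, extend pos (pos ∘ p) 0 (pos v) = pos (p v) := pos.injective.extend_apply _ _
  refine ⟨fun i hi0 hi => ?_, fun i j hji hij hj => ?_, fun i hi1 hi h0 => ?_⟩
  · obtain ⟨v, rfl⟩ := h.exists_pos_eq_iff.2 hi
    exact hpar v ▸ h.lt (h.pos_pos_iff.1 hi0)
  · obtain ⟨v, rfl⟩ := h.exists_pos_eq_iff.2 hj
    obtain ⟨u, rfl⟩ := h.exists_pos_eq_iff.2 (hij.trans_lt hj)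
    rw [hpar] at hji ⊢
    rw [hpar]
    exact h.nested (h.pos_pos_iff.1 (by omega)) (h.pos_pos_iff.1 (by omega)) hji hij
  · obtain ⟨v, rfl⟩ := h.exists_pos_eq_iff.2 hi
    rw [hpar, ← h.pos_root, pos.injective.eq_iff] at h0
    have := h.pos_le_one ha (h.pos_pos_iff.1 (by omega)) h0
    omega

theorem eq_comap_parentGraph (h : IsPreorderNumbering T a p pos) :
    T = (parentGraph (Fintype.card V) (extend pos (pos ∘ p) 0)).comap pos := by
  ext u v
  rw [SimpleGraph.comap_adj, parentGraph, SimpleGraph.fromRel_adj]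
  simp only [pos.injective.extend_apply, comp_apply, h.pos_pos_iff, pos.injective.ne_iff,
    pos.injective.eq_iff, h.exists_pos_eq_iff.1 ⟨_, rfl⟩, true_and]
  refine ⟨fun huv => ⟨huv.ne, h.eq_of_adj huv⟩, ?_⟩
  rintro ⟨-, ⟨hv, rfl⟩ | ⟨hu, rfl⟩⟩
  · exact h.adj hv
  · exact (h.adj hu).symm

end IsPreorderNumbering

theorem exists_preorder_numbering (hT : T.IsTree) (hV : 1 < Fintype.card V) :
    ∃ (par : ℕ → ℕ) (pos : V ↪ ℕ), IsPreorderParent (Fintype.card V) par ∧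
      univ.map pos = range (Fintype.card V) ∧
      T = (parentGraph (Fintype.card V) par).comap pos := by
  classical
  have : Nontrivial V := Fintype.one_lt_card_iff_nontrivial.1 hV
  obtain ⟨a, ha⟩ := hT.exists_vert_degree_one_of_nontrivial
  obtain ⟨p, pos, h⟩ := exists_isPreorderNumbering hT a
  exact ⟨_, pos, h.isPreorderParent (SimpleGraph.degree_eq_one_iff_existsUnique_adj.1 ha),
    h.map_univ, h.eq_comap_parentGraph⟩

end Numbering

/-! ### Connectedness after the deletion of two vertices -/

section SpineHook

variable (n : ℕ) (par : ℕ → ℕ) (G : SimpleGraph ℕ)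

/-- The hooks: the first and the last leaf in preorder, and all vertices of degree two. -/
def hooks : Finset ℕ := insert 0 (insert (n - 1) (degTwo n par))

/-- From every run `[a, b]` of vertices of degree two some edge of `G` leads to a vertex outside
`[a, b] ∪ {par a, b + 1}`, so that deleting the two tree neighbours `par a` and `b + 1` does not
isolate the run. The run whose neighbours are the first leaf `0` and the last leaf `n - 1` is
exempt: then the tree is a path and the run is everything that survives. -/
def ExitsRuns : Prop :=
  ∀ ⦃a b⦄, a ≤ b → Icc a b ⊆ degTwo n par → ¬ (par a = 0 ∧ b + 1 = n - 1) →
    ∃ i ∈ Icc a b, ∃ j, (j < a ∨ b + 1 < j) ∧ j ≠ par a ∧ G.Adj i j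

/-- Every vertex but the first and the last leaf lies, in preorder, strictly between two hooks that
are joined by an edge of `G`. -/
def Straddles : Prop :=
  ∀ ⦃p⦄, 0 < p → p < n - 1 → ∃ j ∈ hooks n par, ∃ k ∈ hooks n par, j < p ∧ p < k ∧ G.Adj j k

/-- A graph on `0, …, n - 1` that contains the tree `par`, the spine edges, which join leaves that
are consecutive in preorder, and enough edges at the hooks. -/
structure IsSpineHookGraph : Prop extends IsPreorderParent n par where
  lt_of_adj : ∀ ⦃x y⦄, G.Adj x y → x < n
  tree : parentGraph n par ≤ G
  spine : ∀ ⦃x y⦄, x ∈ leaves n par → y ∈ leaves n par → x < y →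
    (∀ z, x < z → z < y → z ∉ leaves n par) → G.Adj x y
  exits : ExitsRuns n par G
  straddles : Straddles n par G

end SpineHook

variable {G : SimpleGraph ℕ} {s t : ℕ} {c : ℕ → Prop}

theorem eq_zero_or_last_of_mem_hooks_of_mem_leaves (hi : i ∈ hooks n par)
    (hl : i ∈ leaves n par) : i = 0 ∨ i = n - 1 := by
  rw [hooks, mem_insert, mem_insert] at hi
  rcases hi with hi | hi | hi
  · exact Or.inl hi
  · exact Or.inr hi
  · exact absurd hl (notMem_leaves_of_mem_degTwo hi)

namespace IsPreorderParent

theorem exists_first_leaf_or (h : IsPreorderParent n par) (D : ℕ → Prop) (hi : i < n) :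
    ∃ e, i ≤ e ∧ e < n ∧ (D e ∨ e ∈ leaves n par) ∧
      ∀ k, i ≤ k → k < e → ¬ D k ∧ k ∉ leaves n par := by
  classical
  have hlast : i ≤ n - 1 ∧ (D (n - 1) ∨ n - 1 ∈ leaves n par) :=
    ⟨by omega, Or.inr (h.last_mem_leaves (by omega))⟩
  have hex : ∃ e, i ≤ e ∧ (D e ∨ e ∈ leaves n par) := ⟨n - 1, hlast⟩
  have hle : Nat.find hex ≤ n - 1 := Nat.find_min' hex hlast
  refine ⟨Nat.find hex, (Nat.find_spec hex).1, by omega, (Nat.find_spec hex).2, fun k hk hke => ?_⟩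
  have := Nat.find_min hex hke
  tauto

theorem Icc_subset_degTwo (h : IsPreorderParent n par) {a b : ℕ} (hb : b + 1 < n)
    (hleaf : ∀ k, a ≤ k → k ≤ b → k ∉ leaves n par)
    (hpar : ∀ j, b + 1 < j → j < n → par j < a ∨ b < par j) : Icc a b ⊆ degTwo n par := by
  intro k hk
  rw [mem_Icc] at hk
  obtain ⟨hk0, hkn, hpk⟩ := h.par_succ_of_notMem_leaves (by omega) (hleaf k hk.1 hk.2)
  refine mem_degTwo.2 ⟨hk0, fun j => ⟨fun hj => ?_, fun hj => hj ▸ ⟨by omega, hkn, hpk⟩⟩⟩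
  by_contra hjk
  have hkj := (h.succ_mem_children (mem_children.2 hj)).2
  rcases Nat.lt_or_ge (b + 1) j with hbj | hbj
  · have := hpar j hbj hj.2.1
    omega
  · have := h.par_succ_of_notMem_leaves (i := j - 1) (by omega)
      (hleaf (j - 1) (by omega) (by omega))
    rw [Nat.sub_add_cancel hj.1] at this
    omega

end IsPreorderParent

namespace IsSpineHookGraph

theorem iff_par (hG : IsSpineHookGraph n par G) (hc : IsCutColoring G s t c) (hi0 : 0 < i)
    (hi : i < n) (his : i ≠ s) (hit : i ≠ t) (hps : par i ≠ s) (hpt : par i ≠ t) :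
    c i ↔ c (par i) :=
  hc (hG.tree (hG.parentGraph_adj.2 (Or.inl (mem_children.2 ⟨hi0, hi, rfl⟩)))) his hit hps hpt

theorem iff_of_forall_notMem_leaves (hG : IsSpineHookGraph n par G)
    (hc : IsCutColoring G s t c) {e k : ℕ} (he : e < n)
    (hrun : ∀ k, i ≤ k → k < e → ¬ (k = s ∨ k = t) ∧ k ∉ leaves n par)
    (hik : i ≤ k) (hke : k ≤ e) (hks : k ≠ s) (hkt : k ≠ t) : c k ↔ c i := by
  induction k, hik using Nat.le_induction with
  | base => rfl
  | succ k hik ih =>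
    obtain ⟨hkD, hkl⟩ := hrun k hik hke
    have hp := (hG.par_succ_of_notMem_leaves (by omega) hkl).2.2
    have := hG.iff_par hc (by omega) (by omega) hks hkt (by omega) (by omega)
    rw [this, hp]
    exact ih (by omega) (by tauto) (by tauto)

theorem iff_of_mem_leaves (hG : IsSpineHookGraph n par G) (hc : IsCutColoring G s t c) {x y : ℕ}
    (hxy : x ≤ y) (hx : x ∈ leaves n par) (hy : y ∈ leaves n par)
    (hD : ∀ z ∈ leaves n par, x ≤ z → z ≤ y → z ≠ s ∧ z ≠ t) : c x ↔ c y := by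
  induction y using Nat.strong_induction_on with
  | _ y ih =>
    rcases hxy.eq_or_lt with rfl | hlt
    · rfl
    obtain ⟨z, hz, hmax⟩ := exists_max_image {z ∈ leaves n par | x ≤ z ∧ z < y} id
      ⟨x, mem_filter.2 ⟨hx, le_rfl, hlt⟩⟩
    simp only [mem_filter, id] at hz hmax
    have hzy := hG.spine hz.1 hy hz.2.2 fun w hzw hwy hw =>
      absurd (hmax w ⟨hw, by omega, hwy⟩) (by omega)
    have hzD := hD z hz.1 hz.2.1 hz.2.2.le
    have hyD := hD y hy hxy le_rfl
    rw [← hc hzy hzD.1 hzD.2 hyD.1 hyD.2]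
    exact ih z hz.2.2 hz.2.1 hz.1 fun w hw hxw hwz => hD w hw hxw (by omega)

theorem exists_first_offcolor (hG : IsSpineHookGraph n par G) (hc : IsCutColoring G s t c)
    {X : Prop} (h0 : 0 ≠ s → 0 ≠ t → (c 0 ↔ X))
    (hex : ∃ i < n, i ≠ s ∧ i ≠ t ∧ ¬ (c i ↔ X)) :
    ∃ i, 0 < i ∧ i < n ∧ i ≠ s ∧ i ≠ t ∧ ¬ (c i ↔ X) ∧ (par i = s ∨ par i = t) ∧
      ∀ k < i, k ≠ s → k ≠ t → (c k ↔ X) := by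
  classical
  obtain ⟨i, ⟨hin, his, hit, hiX⟩, hmin⟩ : ∃ i, (i < n ∧ i ≠ s ∧ i ≠ t ∧ ¬ (c i ↔ X)) ∧
      ∀ k < i, ¬ (k < n ∧ k ≠ s ∧ k ≠ t ∧ ¬ (c k ↔ X)) :=
    ⟨Nat.find hex, Nat.find_spec hex, fun k hk => Nat.find_min hex hk⟩
  have hbelow : ∀ k < i, k ≠ s → k ≠ t → (c k ↔ X) := fun k hk hks hkt =>
    not_not.1 fun hkX => hmin k hk ⟨by omega, hks, hkt, hkX⟩
  have hi0 : 0 < i := Nat.pos_of_ne_zero fun hi0 => hiX (hi0 ▸ h0 (hi0 ▸ his) (hi0 ▸ hit))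
  refine ⟨i, hi0, hin, his, hit, hiX, ?_, hbelow⟩
  by_contra! hpar
  exact hiX ((hG.iff_par hc hi0 hin his hit hpar.1 hpar.2).trans
    (hbelow _ (hG.par_lt hi0 hin) hpar.1 hpar.2))

theorem iff_of_gt (hG : IsSpineHookGraph n par G) (hc : IsCutColoring G s t c) {X : Prop}
    (hX : ∀ x ∈ leaves n par, x ≠ s → x ≠ t → (c x ↔ X)) (hsj : s < j) (htj : t < j)
    (hj : j < n) : c j ↔ X := by
  obtain ⟨e, hje, hen, he, hrun⟩ := hG.exists_first_leaf_or (fun k => k = s ∨ k = t) hj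
  rw [← hG.iff_of_forall_notMem_leaves hc hen hrun hje le_rfl (by omega) (by omega)]
  exact hX e (he.resolve_left (by omega)) (by omega) (by omega)

/-- The core of the argument. Let `i` be the least survivor that is not of colour `X`. Its parent is
deleted, and descending from `i` along first children one cannot arrive at a surviving leaf, so one
runs into the other deleted vertex `e`. The vertices after `e` have colour `X` and so do not hang
below `[i, e - 1]`. Thus `[i, e - 1]` is a run of vertices of degree two, and an edge leaving it
gives a contradiction. -/
theorem iff_of_forall_mem_leaves_of_par (hG : IsSpineHookGraph n par G)
    (hc : IsCutColoring G s t c) {X : Prop}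
    (hX : ∀ x ∈ leaves n par, x ≠ s → x ≠ t → (c x ↔ X)) (hst : ¬ (s = 0 ∧ t = n - 1))
    (hi0 : 0 < i) (hi : i < n) (hit : i ≠ t) (hps : par i = s)
    (hbelow : ∀ k < i, k ≠ s → k ≠ t → (c k ↔ X)) : c i ↔ X := by
  by_contra hiX
  have hsi : s < i := hps ▸ hG.par_lt hi0 hi
  obtain ⟨e, hie, hen, he, hrun⟩ := hG.exists_first_leaf_or (fun k => k = s ∨ k = t) hi
  have hcol : ∀ k, i ≤ k → k ≤ e → k ≠ s → k ≠ t → ¬ (c k ↔ X) :=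
    fun k hik hke hks hkt hkX =>
      hiX ((hG.iff_of_forall_notMem_leaves hc hen hrun hik hke hks hkt).symm.trans hkX)
  obtain rfl : e = t := by
    by_contra het
    exact hcol e hie le_rfl (by omega) het (hX e (he.resolve_left (by omega)) (by omega) het)
  have habove : ∀ j, e < j → j < n → (c j ↔ X) := fun j hj => hG.iff_of_gt hc hX (by omega) hj
  have hdeg : Icc i (e - 1) ⊆ degTwo n par := by
    refine hG.Icc_subset_degTwo (by omega) (fun k hik hke => (hrun k hik (by omega)).2)
      fun j hj hjn => ?_
    by_contra! hpj
    have := hG.iff_par hc (i := j) (by omega) hjn (by omega) (by omega) (by omega) (by omega)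
    exact hcol (par j) hpj.1 (by omega) (by omega) (by omega)
      (this.symm.trans (habove j (by omega) hjn))
  obtain ⟨k, hk, j, hj, hjp, hkj⟩ := hG.exits (by omega) hdeg (by omega)
  rw [mem_Icc] at hk
  have hjn := hG.lt_of_adj hkj.symm
  refine hcol k hk.1 (by omega) (by omega) (by omega)
    ((hc hkj (by omega) (by omega) (by omega) (by omega)).trans ?_)
  rcases hj with hj | hj
  · exact hbelow j hj (by omega) (by omega)
  · exact habove j (by omega) hjn

theorem iff_of_forall_mem_leaves (hG : IsSpineHookGraph n par G) (hc : IsCutColoring G s t c)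
    {X : Prop} (hX : ∀ x ∈ leaves n par, x ≠ s → x ≠ t → (c x ↔ X))
    (hst : ¬ (s = 0 ∧ t = n - 1)) (hts : ¬ (t = 0 ∧ s = n - 1))
    (hj : j < n) (hjs : j ≠ s) (hjt : j ≠ t) : c j ↔ X := by
  by_contra hjX
  obtain ⟨i, hi0, hi, his, hit, hiX, hp | hp, hbelow⟩ := hG.exists_first_offcolor hc
    (hX 0 (zero_mem_leaves (by omega))) ⟨j, hj, hjs, hjt, hjX⟩
  · exact hiX (hG.iff_of_forall_mem_leaves_of_par hc hX hst hi0 hi hit hp hbelow)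
  · exact hiX (hG.iff_of_forall_mem_leaves_of_par hc.symm (fun x hx hxt hxs => hX x hx hxs hxt) hts
      hi0 hi his hp fun k hk hkt hks => hbelow k hk hks hkt)

theorem iff_one_of_two_leaves (hG : IsSpineHookGraph n par G) (hn : 3 ≤ n)
    (hc : IsCutColoring G s t c) (hs : s ∈ leaves n par) (ht : t ∈ leaves n par) (hi : i < n)
    (his : i ≠ s) (hit : i ≠ t) : c i ↔ c 1 := by
  have hpar : ∀ i, 1 < i → i < n → par i ≠ s ∧ par i ≠ t := fun i hi1 hi => by
    have := par_notMem_leaves (by omega) hi (hG.root hi1 hi)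
    exact ⟨fun h => this (h ▸ hs), fun h => this (h ▸ ht)⟩
  have h1 : 1 ≠ s ∧ 1 ≠ t := by
    have h2 := hG.par_lt (i := 2) (by omega) (by omega)
    have := hG.root (i := 2) (by omega) (by omega)
    have := hpar 2 (by omega) (by omega)
    omega
  induction i using Nat.strong_induction_on with
  | _ i ih =>
    obtain rfl | rfl | hi1 : i = 0 ∨ i = 1 ∨ 1 < i := by omega
    · have hp := hG.par_one (by omega)
      have := hG.iff_par hc one_pos (by omega) h1.1 h1.2 (by omega) (by omega)
      rw [this, hp]
    · rfl
    · have hp := hpar i hi1 hi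
      have hlt := hG.par_lt (by omega) hi
      exact (hG.iff_par hc (by omega) hi his hit hp.1 hp.2).trans
        (ih _ hlt (by omega) hp.1 hp.2)

theorem not_iff_zero_of_ge (hG : IsSpineHookGraph n par G) (hc : IsCutColoring G s t c)
    (h0n : ¬ (c 0 ↔ c (n - 1))) (hlow : ∀ x ∈ leaves n par, x < s → (c 0 ↔ c x))
    (hhigh : ∀ x ∈ leaves n par, s < x → (c x ↔ c (n - 1))) (hti : t < i)
    (hiX : ¬ (c i ↔ c 0)) {k : ℕ} (hik : i ≤ k) (hk : k < n) (hks : k ≠ s) : ¬ (c k ↔ c 0) := by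
  rcases Nat.lt_or_ge s k with hsk | hsk
  · obtain ⟨e, hke, hen, he, hrun⟩ := hG.exists_first_leaf_or (fun k => k = s ∨ k = t) hk
    have hek := hG.iff_of_forall_notMem_leaves hc hen hrun hke le_rfl (by omega) (by omega)
    have hlast := hhigh e (he.resolve_left (by omega)) (by omega)
    tauto
  · obtain ⟨e, hie, hen, he, hrun⟩ := hG.exists_first_leaf_or (fun k => k = s ∨ k = t) (i := i)
      (by omega)
    have hei := fun k => hG.iff_of_forall_notMem_leaves hc (k := k) hen hrun
    have hse : s ≤ e := by
      by_contra! hes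
      have hfirst := hlow e (he.resolve_left (by omega)) hes
      have := hei e hie le_rfl (by omega) (by omega)
      tauto
    have := hei k hik (by omega) hks (by omega)
    tauto

/-- If an inner leaf `s` and a vertex `t` that is not a leaf are deleted, the spine falls into at
most two pieces, which nevertheless have the same colour. Otherwise let `i` be the least survivor
not of the colour of `0`. Then `t` is the parent of `i`, and no survivor from `i` on has the colour
of `0`. But there is an edge straddling `i - 1`, and its ends survive: a hook cannot be the inner
leaf `s`, and if `t` is a hook then `t = i - 1`. -/
theorem zero_iff_last_of_inner_leaf (hG : IsSpineHookGraph n par G) (hc : IsCutColoring G s t c)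
    (hs : s ∈ leaves n par) (hs0 : 0 < s) (hsn : s < n - 1) (ht : t ∉ leaves n par) (htn : t < n) :
    c 0 ↔ c (n - 1) := by
  by_contra h0n
  have htpos := hG.par_succ_of_notMem_leaves htn ht
  have hleaf : ∀ x ∈ leaves n par, x ≠ t := fun x hx hxt => ht (hxt ▸ hx)
  have hlow : ∀ x ∈ leaves n par, x < s → (c 0 ↔ c x) := fun x hx hxs =>
    hG.iff_of_mem_leaves hc (by omega) (zero_mem_leaves (by omega)) hx
      fun z hz _ hzx => ⟨by omega, hleaf z hz⟩
  have hhigh : ∀ x ∈ leaves n par, s < x → (c x ↔ c (n - 1)) := fun x hx hxs =>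
    hG.iff_of_mem_leaves hc (Nat.le_sub_one_of_lt (mem_leaves.1 hx).1) hx
      (hG.last_mem_leaves (by omega)) fun z hz hxz _ => ⟨by omega, hleaf z hz⟩
  obtain ⟨i, hi0, hin, his, hit, hiX, hpi, hbelow⟩ := hG.exists_first_offcolor (X := c 0) hc
    (fun _ _ => Iff.rfl) ⟨n - 1, by omega, by omega, by omega, fun h => h0n h.symm⟩
  have hpt : par i = t := hpi.resolve_left fun hp =>
    par_notMem_leaves hi0 hin (by omega) (hp ▸ hs)
  have hti : t < i := hpt ▸ hG.par_lt hi0 hin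
  have hhook : ∀ x ∈ hooks n par, x ≠ i - 1 → x ≠ s ∧ x ≠ t := fun x hx hxi => by
    refine ⟨fun hxs => ?_, fun hxt => ?_⟩
    · have := eq_zero_or_last_of_mem_hooks_of_mem_leaves hx (hxs ▸ hs)
      omega
    · rw [hooks, mem_insert, mem_insert, mem_degTwo] at hx
      rcases hx with hx | hx | hx
      · omega
      · omega
      · have := (hx.2 i).1 ⟨hi0, hin, hpt.trans hxt.symm⟩
        omega
  obtain ⟨j, hj, k, hk, hji, hik, hjk⟩ := hG.straddles (p := i - 1) (by omega) (by omega)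
  obtain ⟨hjs, hjt⟩ := hhook j hj (by omega)
  obtain ⟨hks, hkt⟩ := hhook k hk (by omega)
  exact hG.not_iff_zero_of_ge hc h0n hlow hhigh hti hiX (by omega) (hG.lt_of_adj hjk.symm) hks
    ((hc hjk hjs hjt hks hkt).symm.trans (hbelow j (by omega) hjs hjt))

theorem exists_forall_mem_leaves_iff (hG : IsSpineHookGraph n par G) (hc : IsCutColoring G s t c)
    (ht : t ∉ leaves n par) (htn : t < n) :
    ∃ X : Prop, ∀ x ∈ leaves n par, x ≠ s → (c x ↔ X) := by
  have hlt : ∀ x ∈ leaves n par, x < n := fun x hx => (mem_leaves.1 hx).1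
  have hleaf : ∀ x ∈ leaves n par, x ≠ t := fun x hx hxt => ht (hxt ▸ hx)
  have h0 : 0 ∈ leaves n par := zero_mem_leaves (by omega)
  have hlast := hG.last_mem_leaves (by omega)
  have hhigh : ∀ x ∈ leaves n par, s < x → (c x ↔ c (n - 1)) := fun x hx hxs =>
    hG.iff_of_mem_leaves hc (Nat.le_sub_one_of_lt (hlt x hx)) hx hlast
      fun z hz hxz _ => ⟨by omega, hleaf z hz⟩
  rcases Nat.eq_zero_or_pos s with hs0 | hs0
  · exact ⟨c (n - 1), fun x hx hxs => hhigh x hx (by omega)⟩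
  refine ⟨c 0, fun x hx hxs => ?_⟩
  by_cases hsx : s ∈ leaves n par ∧ s < x
  · have hxn := hlt x hx
    rw [hhigh x hx hsx.2, hG.zero_iff_last_of_inner_leaf hc hsx.1 hs0 (by omega) ht htn]
  · refine (hG.iff_of_mem_leaves hc (by omega) h0 hx fun z hz _ hzx => ⟨?_, hleaf z hz⟩).symm
    rintro rfl
    exact hsx ⟨hz, by omega⟩

theorem iff_of_isCutColoring (hG : IsSpineHookGraph n par G) (hn : 3 ≤ n)
    (hsn : s < n) (htn : t < n) (hc : IsCutColoring G s t c) (hi : i < n) (hj : j < n)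
    (his : i ≠ s) (hit : i ≠ t) (hjs : j ≠ s) (hjt : j ≠ t) : c i ↔ c j := by
  by_cases hst : s ∈ leaves n par ∧ t ∈ leaves n par
  · rw [hG.iff_one_of_two_leaves hn hc hst.1 hst.2 hi his hit,
      hG.iff_one_of_two_leaves hn hc hst.1 hst.2 hj hjs hjt]
  wlog ht : t ∉ leaves n par generalizing s t
  · exact this htn hsn hc.symm hit his hjt hjs (by tauto) (by tauto)
  obtain ⟨X, hX⟩ := hG.exists_forall_mem_leaves_iff hc ht htn
  have htlast : t ≠ n - 1 := fun h => ht (h ▸ hG.last_mem_leaves (by omega))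
  have ht0 : t ≠ 0 := fun h => ht (h ▸ zero_mem_leaves (by omega))
  have hiX : ∀ {i}, i < n → i ≠ s → i ≠ t → (c i ↔ X) :=
    hG.iff_of_forall_mem_leaves hc (fun x hx hxs _ => hX x hx hxs) (by omega) (by omega)
  rw [hiX hi his hit, hiX hj hjs hjt]

end IsSpineHookGraph

/-! ### Choosing the edges -/

section Enum

variable {A : Finset ℕ}

/-- The elements of `A` in increasing order. For `i ≥ A.card` the value is the junk value `0`. -/
noncomputable def enum (A : Finset ℕ) (i : ℕ) : ℕ := Nat.nth (· ∈ A) i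

theorem enum_lt_enum (hij : i < j) (hj : j < A.card) : enum A i < enum A j :=
  Nat.nth_lt_nth_of_lt_card A.finite_toSet hij (by simpa using hj)

theorem enum_add_one_lt_enum (hij : i + 2 ≤ j) (hj : j < A.card) : enum A i + 1 < enum A j := by
  have h1 : enum A i < enum A (i + 1) := enum_lt_enum (by omega) (by omega)
  have h2 : enum A (i + 1) < enum A j := enum_lt_enum (by omega) hj
  omega

theorem enum_le_enum (hij : i ≤ j) (hj : j < A.card) : enum A i ≤ enum A j :=
  hij.eq_or_lt.elim (fun h => h ▸ le_rfl) fun h => (enum_lt_enum h hj).le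

theorem lt_of_enum_lt_enum (hi : i < A.card) (hij : enum A i < enum A j) : i < j :=
  lt_of_not_ge fun hji => (enum_le_enum hji hi).not_gt hij

theorem enum_mem (hi : i < A.card) : enum A i ∈ A :=
  Nat.nth_mem_of_lt_card A.finite_toSet (by simpa using hi)

theorem exists_enum_eq {x : ℕ} (hx : x ∈ A) : ∃ i < A.card, enum A i = x := by
  simpa [enum] using Nat.exists_lt_card_finite_nth_eq A.finite_toSet hx

theorem enum_zero (h0 : 0 ∈ A) : enum A 0 = 0 := by
  obtain ⟨i, hi, h⟩ := exists_enum_eq h0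
  exact Nat.le_zero.1 ((enum_le_enum i.zero_le hi).trans_eq h)

theorem enum_last {x : ℕ} (hx : x ∈ A) (hmax : ∀ y ∈ A, y ≤ x) : enum A (A.card - 1) = x := by
  obtain ⟨i, hi, rfl⟩ := exists_enum_eq hx
  exact le_antisymm (hmax _ (enum_mem (by omega))) (enum_le_enum (by omega) (by omega))

theorem exists_enum_lt_le_enum_succ {p k : ℕ} (h0 : enum A 0 < p) (hp : p ≤ enum A k) :
    ∃ u < k, enum A u < p ∧ p ≤ enum A (u + 1) := by
  have hex : ∃ w, p ≤ enum A w := ⟨k, hp⟩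
  have hpos : Nat.find hex ≠ 0 := fun h => absurd (h ▸ Nat.find_spec hex) (by omega)
  have hle := Nat.find_min' hex hp
  refine ⟨Nat.find hex - 1, by omega, not_le.1 (Nat.find_min hex (by omega)), ?_⟩
  rw [Nat.sub_add_cancel (by omega)]
  exact Nat.find_spec hex

/-- Each element of `A` paired with the one that comes `m` places later in increasing order. -/
noncomputable def shiftPairs (A : Finset ℕ) (m : ℕ) : Finset (ℕ × ℕ) :=
  (range (A.card - m)).image fun i => (enum A i, enum A (i + m))

theorem mem_shiftPairs {m x y : ℕ} :
    (x, y) ∈ shiftPairs A m ↔ ∃ i, i + m < A.card ∧ enum A i = x ∧ enum A (i + m) = y := by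
  simp only [shiftPairs, mem_image, mem_range, Nat.lt_sub_iff_add_lt, Prod.mk.injEq]

theorem card_shiftPairs (A : Finset ℕ) (m : ℕ) : (shiftPairs A m).card = A.card - m := by
  rw [shiftPairs, card_image_of_injOn, card_range]
  intro i hi j hj hij
  simp only [coe_range, Set.mem_Iio, Prod.mk.injEq] at hi hj hij
  rcases lt_trichotomy i j with h | h | h
  · exact absurd hij.1 (enum_lt_enum h (by omega)).ne
  · exact h
  · exact absurd hij.1 (enum_lt_enum h (by omega)).ne'

theorem mem_shiftPairs_one {x y : ℕ} (hx : x ∈ A) (hy : y ∈ A) (hxy : x < y)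
    (hgap : ∀ z, x < z → z < y → z ∉ A) : (x, y) ∈ shiftPairs A 1 := by
  obtain ⟨i, hi, rfl⟩ := exists_enum_eq hx
  obtain ⟨j, hj, rfl⟩ := exists_enum_eq hy
  have hij := lt_of_enum_lt_enum hi hxy
  obtain rfl : j = i + 1 := by
    by_contra hne
    exact hgap _ (enum_lt_enum i.lt_succ_self (by omega))
      (enum_lt_enum (i := i + 1) (by omega) hj) (enum_mem (by omega))
  exact mem_shiftPairs.2 ⟨i, hj, rfl, rfl⟩

theorem notMem_shiftPairs_one {x y z : ℕ} (hz : z ∈ A) (hxz : x < z) (hzy : z < y) :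
    (x, y) ∉ shiftPairs A 1 := by
  rw [mem_shiftPairs]
  rintro ⟨i, hi, rfl, rfl⟩
  obtain ⟨k, hk, rfl⟩ := exists_enum_eq hz
  have := lt_of_enum_lt_enum (by omega) hxz
  have := lt_of_enum_lt_enum hk hzy
  omega

end Enum

/-- The graph whose edges are the pairs in `P`. -/
def pairGraph (P : Finset (ℕ × ℕ)) : SimpleGraph ℕ := SimpleGraph.fromRel fun x y => (x, y) ∈ P

theorem pairGraph_adj {P : Finset (ℕ × ℕ)} {x y : ℕ} :
    (pairGraph P).Adj x y ↔ x ≠ y ∧ ((x, y) ∈ P ∨ (y, x) ∈ P) :=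
  SimpleGraph.fromRel_adj _ _ _

theorem pairGraph_mono {P Q : Finset (ℕ × ℕ)} (hPQ : P ⊆ Q) : pairGraph P ≤ pairGraph Q :=
  fun _ _ hxy => ⟨hxy.1, hxy.2.imp (@hPQ _) (@hPQ _)⟩

theorem ExitsRuns.mono {G' : SimpleGraph ℕ} (hG : ExitsRuns n par G) (hGG' : G ≤ G') :
    ExitsRuns n par G' := fun a b hab hrun hends => by
  obtain ⟨i, hi, j, hj, hjp, hij⟩ := hG hab hrun hends
  exact ⟨i, hi, j, hj, hjp, hGG' hij⟩

theorem Straddles.mono {G' : SimpleGraph ℕ} (hG : Straddles n par G) (hGG' : G ≤ G') :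
    Straddles n par G' := fun p hp0 hpn => by
  obtain ⟨j, hj, k, hk, hjp, hpk, hjk⟩ := hG hp0 hpn
  exact ⟨j, hj, k, hk, hjp, hpk, hGG' hjk⟩

/-- Pairs of hooks that can serve as hook edges: they are neither edges of the tree nor, by
`inner_leaf`, spine edges, and they satisfy the two conditions on which connectedness depends. -/
structure IsHookPairs (n : ℕ) (par : ℕ → ℕ) (H : Finset (ℕ × ℕ)) : Prop where
  mem_hooks : ∀ ⦃x y⦄, (x, y) ∈ H → x ∈ hooks n par ∧ y ∈ hooks n par
  lt : ∀ ⦃x y⦄, (x, y) ∈ H → x < y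
  par_ne : ∀ ⦃x y⦄, (x, y) ∈ H → par y ≠ x
  inner_leaf : (0, n - 1) ∈ H → ∃ z ∈ leaves n par, 0 < z ∧ z < n - 1
  exits : ExitsRuns n par (pairGraph H)
  straddles : Straddles n par (pairGraph H)

theorem zero_mem_hooks : 0 ∈ hooks n par := mem_insert_self _ _

theorem last_mem_hooks : n - 1 ∈ hooks n par := mem_insert_of_mem (mem_insert_self _ _)

theorem mem_hooks_of_mem_degTwo (hi : i ∈ degTwo n par) : i ∈ hooks n par :=
  mem_insert_of_mem (mem_insert_of_mem hi)

theorem pos_and_succ_lt_of_mem_degTwo (hi : i ∈ degTwo n par) : 0 < i ∧ i + 1 < n := by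
  obtain ⟨hi0, h⟩ := mem_degTwo.1 hi
  exact ⟨hi0, ((h _).2 rfl).2.1⟩

theorem le_of_mem_hooks (hi : i ∈ hooks n par) : i ≤ n - 1 := by
  rw [hooks, mem_insert, mem_insert] at hi
  rcases hi with rfl | rfl | hi
  · exact Nat.zero_le _
  · exact le_rfl
  · have := pos_and_succ_lt_of_mem_degTwo hi
    omega

theorem card_hooks (hn : 2 ≤ n) : (hooks n par).card = (degTwo n par).card + 2 := by
  rw [hooks, card_insert_of_notMem, card_insert_of_notMem]
  · intro h
    have := pos_and_succ_lt_of_mem_degTwo h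
    omega
  · rw [mem_insert]
    rintro (h | h)
    · omega
    · have := pos_and_succ_lt_of_mem_degTwo h
      omega

namespace IsPreorderParent

theorem exists_inner_leaf (h : IsPreorderParent n par) (hn : (degTwo n par).card + 2 < n) :
    ∃ z ∈ leaves n par, 0 < z ∧ z < n - 1 := by
  by_contra! hleaf
  have := card_le_card (h.Icc_subset_degTwo (a := 1) (b := n - 2) (by omega)
    (fun k hk1 hkn hk => absurd (hleaf k hk hk1) (by omega)) (by omega))
  rw [Nat.card_Icc] at this
  omega

theorem eq_succ_of_par_mem_hooks (h : IsPreorderParent n par) (hj0 : 0 < j) (hj : j < n)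
    (hp : par j ∈ hooks n par) : j = par j + 1 := by
  rw [hooks, mem_insert, mem_insert] at hp
  rcases hp with hp | hp | hp
  · by_contra hne
    exact h.root (by omega) hj hp
  · have := h.par_lt hj0 hj
    omega
  · exact ((mem_degTwo.1 hp).2 j).1 ⟨hj0, hj, rfl⟩

end IsPreorderParent

theorem exitsRuns_of_degTwo_eq_singleton {x : ℕ} (hx : degTwo n par = {x})
    (hlast : par x = 0 → G.Adj x (n - 1)) (hzero : par x ≠ 0 → G.Adj x 0) : ExitsRuns n par G := by
  intro a b hab hrun hends
  have ha : a = x := mem_singleton.1 (hx ▸ hrun (left_mem_Icc.2 hab))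
  have hb : b = x := mem_singleton.1 (hx ▸ hrun (right_mem_Icc.2 hab))
  obtain ⟨hx0, hxn⟩ := pos_and_succ_lt_of_mem_degTwo (hx ▸ mem_singleton_self x)
  rw [ha, hb] at hends ⊢
  refine ⟨x, left_mem_Icc.2 le_rfl, ?_⟩
  by_cases hp : par x = 0
  · exact ⟨n - 1, by omega, by omega, hlast hp⟩
  · exact ⟨0, by omega, Ne.symm hp, hzero hp⟩

theorem isHookPairs_of_degTwo_eq_singleton (h : IsPreorderParent n par) (hn : 4 ≤ n) {x : ℕ}
    (hx : degTwo n par = {x}) :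
    IsHookPairs n par {(0, n - 1), if par x = 0 then (x, n - 1) else (0, x)} := by
  have hxmem : x ∈ degTwo n par := hx ▸ mem_singleton_self x
  have hxhook := mem_hooks_of_mem_degTwo hxmem
  obtain ⟨hx0, hxn⟩ := pos_and_succ_lt_of_mem_degTwo hxmem
  have hmem : ∀ y z, (y, z) ∈ ({(0, n - 1), if par x = 0 then (x, n - 1) else (0, x)} :
      Finset (ℕ × ℕ)) ↔ (y = 0 ∧ z = n - 1) ∨ (par x = 0 ∧ y = x ∧ z = n - 1) ∨
        (par x ≠ 0 ∧ y = 0 ∧ z = x) := fun y z => by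
    split_ifs with hp <;> simp [hp]
  refine ⟨fun y z hyz => ?_, fun y z hyz => ?_, fun y z hyz => ?_,
    fun _ => h.exists_inner_leaf (by rw [hx, card_singleton]; omega),
    exitsRuns_of_degTwo_eq_singleton hx (fun hp => ?_) fun hp => ?_,
    fun p hp0 hpn => ⟨0, zero_mem_hooks, n - 1, last_mem_hooks, hp0, hpn, ?_⟩⟩
  · rcases (hmem y z).1 hyz with ⟨rfl, rfl⟩ | ⟨-, rfl, rfl⟩ | ⟨-, rfl, rfl⟩
    · exact ⟨zero_mem_hooks, last_mem_hooks⟩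
    · exact ⟨hxhook, last_mem_hooks⟩
    · exact ⟨zero_mem_hooks, hxhook⟩
  · have := (hmem y z).1 hyz
    omega
  · rcases (hmem y z).1 hyz with ⟨rfl, rfl⟩ | ⟨hp, rfl, rfl⟩ | ⟨hp, rfl, rfl⟩
    · exact h.root (by omega) (by omega)
    · intro hpn
      have := h.eq_succ_of_par_mem_hooks (by omega) (by omega) (hpn ▸ hxhook)
      have : ¬ 1 < y := fun hy => h.root hy (by omega) hp
      omega
    · exact hp
  · exact pairGraph_adj.2 ⟨by omega, Or.inl ((hmem _ _).2 (by tauto))⟩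
  · exact pairGraph_adj.2 ⟨by omega, Or.inr ((hmem _ _).2 (by tauto))⟩
  · exact pairGraph_adj.2 ⟨by omega, Or.inl ((hmem _ _).2 (by tauto))⟩

theorem enum_hooks_last : enum (hooks n par) ((hooks n par).card - 1) = n - 1 :=
  enum_last last_mem_hooks fun _ => le_of_mem_hooks

theorem pairGraph_shiftPairs_adj {A : Finset ℕ} {m : ℕ} (hm : 0 < m) (hij : i + m = j)
    (hj : j < A.card) : (pairGraph (shiftPairs A m)).Adj (enum A i) (enum A j) := by
  subst hij
  exact pairGraph_adj.2
    ⟨(enum_lt_enum (by omega) hj).ne, Or.inl (mem_shiftPairs.2 ⟨i, hj, rfl, rfl⟩)⟩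

namespace IsPreorderParent

theorem par_enum_hooks_ne (h : IsPreorderParent n par) {u : ℕ} (hiu : i + 2 ≤ u)
    (hu : u < (hooks n par).card) : par (enum (hooks n par) u) ≠ enum (hooks n par) i := by
  intro hp
  have hi := enum_add_one_lt_enum hiu hu
  have hn : enum (hooks n par) u ≤ n - 1 := le_of_mem_hooks (enum_mem hu)
  have := h.eq_succ_of_par_mem_hooks (by omega) (by omega) (hp ▸ enum_mem (by omega))
  omega

/-- Pairs that are at least two places apart lead far enough: if the middle place `m` comes after
`v` or before `u`, use the hook `m` places after `u`, respectively before it; otherwise a hook in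
the middle is joined to `0` or to `n - 1`, and one of these is not a tree neighbour of the run. -/
theorem exists_exit_shiftPairs_hooks (h : IsPreorderParent n par) {m u v : ℕ} (hm : 2 ≤ m)
    (hlow : 2 * m ≤ (hooks n par).card) (hhigh : (hooks n par).card ≤ 2 * m + 1) (hu0 : 0 < u)
    (huv : u ≤ v) (hv : v + 1 < (hooks n par).card)
    (hends : ¬ (par (enum (hooks n par) u) = 0 ∧ enum (hooks n par) v + 1 = n - 1)) :
    ∃ w, u ≤ w ∧ w ≤ v ∧ ∃ j,
      (j < enum (hooks n par) u ∨ enum (hooks n par) v + 1 < j) ∧ j ≠ par (enum (hooks n par) u) ∧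
        (pairGraph (shiftPairs (hooks n par) m)).Adj (enum (hooks n par) w) j := by
  have hzero : enum (hooks n par) 0 = 0 := enum_zero zero_mem_hooks
  have hlast := enum_hooks_last (n := n) (par := par)
  have hu : u < (hooks n par).card := by omega
  have hun := le_of_mem_hooks (enum_mem hu)
  set q := enum (hooks n par)
  have hqmono : ∀ {i j}, i < j → j < (hooks n par).card → q i < q j := enum_lt_enum
  have hqu := hqmono hu0 hu
  have hqv : q v < q ((hooks n par).card - 1) := hqmono (by omega) (by omega)
  have hquv : q u ≤ q v := enum_le_enum huv (by omega)
  have hadj : ∀ i j, i + m = j → j < (hooks n par).card →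
      (pairGraph (shiftPairs (hooks n par) m)).Adj (q i) (q j) :=
    fun i j => pairGraph_shiftPairs_adj (by omega)
  have hpu := h.par_lt (i := q u) (by omega) (by omega)
  rcases Nat.lt_or_ge v m with hvm | hmv
  · have hj : q v + 1 < q (u + m) := enum_add_one_lt_enum (by omega) (by omega)
    exact ⟨u, le_rfl, huv, q (u + m), Or.inr hj, by omega, hadj _ _ rfl (by omega)⟩
  rcases Nat.lt_or_ge m u with hmu | hum
  · exact ⟨u, le_rfl, huv, q (u - m), Or.inl (hqmono (by omega) hu),
      (h.par_enum_hooks_ne (by omega) hu).symm, (hadj _ _ (by omega) hu).symm⟩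
  by_cases hp : par (q u) = 0
  · have hu1 : ¬ 0 + 2 ≤ u := fun hu2 => h.par_enum_hooks_ne hu2 hu (hp.trans hzero.symm)
    exact ⟨(hooks n par).card - 1 - m, by omega, by omega, q ((hooks n par).card - 1),
      by omega, by omega, hadj _ _ (by omega) (by omega)⟩
  · exact ⟨m, hum, hmv, q 0, by omega, by omega, (hadj _ _ (by omega) (by omega)).symm⟩

theorem exitsRuns_shiftPairs_hooks (h : IsPreorderParent n par) {m : ℕ} (hm : 2 ≤ m)
    (hlow : 2 * m ≤ (hooks n par).card) (hhigh : (hooks n par).card ≤ 2 * m + 1) :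
    ExitsRuns n par (pairGraph (shiftPairs (hooks n par) m)) := by
  intro a b hab hrun hends
  have ha := hrun (left_mem_Icc.2 hab)
  have hb := hrun (right_mem_Icc.2 hab)
  obtain ⟨ha0, -⟩ := pos_and_succ_lt_of_mem_degTwo ha
  obtain ⟨-, hbn⟩ := pos_and_succ_lt_of_mem_degTwo hb
  have hzero : enum (hooks n par) 0 = 0 := enum_zero zero_mem_hooks
  have hlast := enum_hooks_last (n := n) (par := par)
  obtain ⟨u, hu, rfl⟩ := exists_enum_eq (mem_hooks_of_mem_degTwo ha)
  obtain ⟨v, hv, rfl⟩ := exists_enum_eq (mem_hooks_of_mem_degTwo hb)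
  have huv : u ≤ v := not_lt.1 fun hvu => (enum_lt_enum hvu hu).not_ge hab
  have hu0 : 0 < u := lt_of_enum_lt_enum (A := hooks n par) (by omega) (by omega)
  have hvL : v < (hooks n par).card - 1 := lt_of_enum_lt_enum hv (by omega)
  obtain ⟨w, huw, hwv, hw⟩ :=
    h.exists_exit_shiftPairs_hooks hm hlow hhigh hu0 huv (by omega) hends
  exact ⟨_, mem_Icc.2 ⟨enum_le_enum huw (by omega), enum_le_enum hwv hv⟩, hw⟩

end IsPreorderParent

theorem straddles_shiftPairs_hooks {m : ℕ} (hm : 0 < m) (hlow : 2 * m ≤ (hooks n par).card)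
    (hm2 : 2 ≤ m ∨ (hooks n par).card = 2) :
    Straddles n par (pairGraph (shiftPairs (hooks n par) m)) := by
  intro p hp0 hpn
  have hzero : enum (hooks n par) 0 = 0 := enum_zero zero_mem_hooks
  have hlast := enum_hooks_last (n := n) (par := par)
  set L := (hooks n par).card
  obtain ⟨u, huL, hup, hpu⟩ := exists_enum_lt_le_enum_succ (A := hooks n par) (k := L - 1)
    (by omega : _ < p) (by omega)
  obtain ⟨i, hiu, hiL, hi⟩ : ∃ i ≤ u, i + m < L ∧ (i + m = L - 1 ∨ u + 1 < i + m) :=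
    ⟨min u (L - 1 - m), by omega, by omega, by omega⟩
  refine ⟨_, enum_mem (by omega : i < L), _, enum_mem hiL,
    (enum_le_enum hiu (by omega)).trans_lt hup, ?_, pairGraph_shiftPairs_adj hm rfl hiL⟩
  rcases hi with hi | hi
  · rwa [hi, hlast]
  · exact hpu.trans_lt (enum_lt_enum hi hiL)

theorem isHookPairs_shiftPairs (h : IsPreorderParent n par) (hn : 4 ≤ n)
    (hcard : (degTwo n par).card ≠ 1) :
    IsHookPairs n par (shiftPairs (hooks n par) ((hooks n par).card / 2)) := by
  have hL : (hooks n par).card = (degTwo n par).card + 2 := card_hooks (by omega)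
  have hzero : enum (hooks n par) 0 = 0 := enum_zero zero_mem_hooks
  have hlast := enum_hooks_last (n := n) (par := par)
  obtain ⟨m, hm⟩ : ∃ m, m = (hooks n par).card / 2 := ⟨_, rfl⟩
  rw [← hm]
  refine ⟨fun x y hxy => ?_, fun x y hxy => ?_, fun x y hxy => ?_, fun h0n => ?_, ?_,
    straddles_shiftPairs_hooks (by omega) (by omega) (by omega)⟩
  · obtain ⟨i, hi, rfl, rfl⟩ := mem_shiftPairs.1 hxy
    exact ⟨enum_mem (by omega), enum_mem hi⟩
  · obtain ⟨i, hi, rfl, rfl⟩ := mem_shiftPairs.1 hxy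
    exact enum_lt_enum (by omega) hi
  · obtain ⟨i, hi, rfl, rfl⟩ := mem_shiftPairs.1 hxy
    by_cases hm2 : 2 ≤ m
    · exact h.par_enum_hooks_ne (by omega) hi
    · obtain rfl : i = 0 := by omega
      rw [show 0 + m = (hooks n par).card - 1 by omega, hlast, hzero]
      exact h.root (by omega) (by omega)
  · obtain ⟨i, hi, hi0, hin⟩ := mem_shiftPairs.1 h0n
    have hi0 : ¬ 0 < i := fun hpos =>
      absurd (enum_lt_enum (A := hooks n par) hpos (by omega)) (by omega)
    have hiL : ¬ i + m < (hooks n par).card - 1 := fun hlt =>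
      absurd (enum_lt_enum (A := hooks n par) hlt (by omega)) (by omega)
    exact h.exists_inner_leaf (by omega)
  · intro a b hab hrun
    have := card_pos.2 ⟨a, hrun (left_mem_Icc.2 hab)⟩
    exact h.exitsRuns_shiftPairs_hooks (by omega) (by omega) (by omega) hab hrun

theorem exists_isHookPairs (h : IsPreorderParent n par) (hn : 4 ≤ n) :
    ∃ H, IsHookPairs n par H ∧ H.card = ((degTwo n par).card + 3) / 2 := by
  by_cases hcard : (degTwo n par).card = 1
  · obtain ⟨x, hx⟩ := card_eq_one.1 hcard
    have hxn := pos_and_succ_lt_of_mem_degTwo (hx ▸ mem_singleton_self x)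
    refine ⟨_, isHookPairs_of_degTwo_eq_singleton h hn hx, ?_⟩
    rw [hcard, card_pair]
    split_ifs
    · exact fun hx0 => hxn.1.ne (Prod.mk.inj hx0).1
    · intro hxlast
      have := (Prod.mk.inj hxlast).2
      omega
  · refine ⟨_, isHookPairs_shiftPairs h hn hcard, ?_⟩
    rw [card_shiftPairs, card_hooks (by omega)]
    omega

namespace IsHookPairs

variable {H : Finset (ℕ × ℕ)}

theorem disjoint_shiftPairs_leaves (hH : IsHookPairs n par H) :
    Disjoint H (shiftPairs (leaves n par) 1) := by
  refine disjoint_left.2 fun ⟨x, y⟩ hxy hspine => ?_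
  obtain ⟨hx, hy⟩ := hH.mem_hooks hxy
  have hlt := hH.lt hxy
  have hy' := le_of_mem_hooks hy
  obtain ⟨i, hi, rfl, rfl⟩ := mem_shiftPairs.1 hspine
  have hx0 := eq_zero_or_last_of_mem_hooks_of_mem_leaves hx (enum_mem (by omega))
  have hyn := eq_zero_or_last_of_mem_hooks_of_mem_leaves hy (enum_mem hi)
  rw [show enum (leaves n par) i = 0 by omega, show enum (leaves n par) (i + 1) = n - 1 by omega]
    at hxy hspine
  obtain ⟨z, hz, hz0, hzn⟩ := hH.inner_leaf hxy
  exact notMem_shiftPairs_one hz hz0 hzn hspine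

end IsHookPairs

theorem isSpineHookGraph_of_isHookPairs (h : IsPreorderParent n par) (hn : 0 < n)
    {H : Finset (ℕ × ℕ)} (hH : IsHookPairs n par H) : IsSpineHookGraph n par
      (parentGraph n par ⊔ pairGraph (H ∪ shiftPairs (leaves n par) 1)) := by
  have hle : pairGraph H ≤ parentGraph n par ⊔ pairGraph (H ∪ shiftPairs (leaves n par) 1) :=
    le_sup_of_le_right (pairGraph_mono subset_union_left)
  have hlt : ∀ x y, (x, y) ∈ H ∪ shiftPairs (leaves n par) 1 → x < n ∧ y < n := fun x y hxy => by
    rcases mem_union.1 hxy with hxy | hxy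
    · have hx := le_of_mem_hooks (hH.mem_hooks hxy).1
      have hy := le_of_mem_hooks (hH.mem_hooks hxy).2
      omega
    · obtain ⟨i, hi, rfl, rfl⟩ := mem_shiftPairs.1 hxy
      exact ⟨(mem_leaves.1 (enum_mem (by omega))).1, (mem_leaves.1 (enum_mem hi)).1⟩
  refine ⟨h, fun x y hxy => ?_, le_sup_left, fun x y hx hy hxy hgap => Or.inr ?_, hH.exits.mono hle,
    hH.straddles.mono hle⟩
  · rcases hxy with hxy | hxy
    · exact h.lt_of_parentGraph_adj hxy
    · exact (pairGraph_adj.1 hxy).2.elim (fun hxy => (hlt x y hxy).1) fun hxy => (hlt y x hxy).2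
  · exact pairGraph_adj.2
      ⟨hxy.ne, Or.inl (mem_union_right _ (mem_shiftPairs_one hx hy hxy hgap))⟩

/-- `P` is a set of edges of the complement of the tree `par`, each listed once. -/
def IsAugmentation (n : ℕ) (par : ℕ → ℕ) (P : Finset (ℕ × ℕ)) : Prop :=
  ∀ ⦃x y⦄, (x, y) ∈ P → x < y ∧ y < n ∧ par y ≠ x

theorem IsAugmentation.disjoint {P : Finset (ℕ × ℕ)} (hP : IsAugmentation n par P)
    (h : IsPreorderParent n par) : Disjoint (parentGraph n par) (pairGraph P) := by
  refine SimpleGraph.disjoint_left.2 fun x y hxy hP' => ?_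
  have hxy := h.parentGraph_adj.1 hxy
  rw [mem_children, mem_children] at hxy
  have := h.par_lt (i := x)
  have := h.par_lt (i := y)
  rcases (pairGraph_adj.1 hP').2 with hP' | hP' <;> have := hP hP' <;> omega

theorem isAugmentation_shiftPairs_leaves (h : IsPreorderParent n par) (hn : 3 ≤ n) :
    IsAugmentation n par (shiftPairs (leaves n par) 1) := by
  intro x y hxy
  obtain ⟨i, hi, rfl, rfl⟩ := mem_shiftPairs.1 hxy
  have hlt : enum (leaves n par) i < enum (leaves n par) (i + 1) := enum_lt_enum i.lt_succ_self hi
  have hx : enum (leaves n par) i ∈ leaves n par := enum_mem (by omega)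
  have hy : enum (leaves n par) (i + 1) ∈ leaves n par := enum_mem hi
  set y := enum (leaves n par) (i + 1)
  have hyn := (mem_leaves.1 hy).1
  refine ⟨hlt, hyn, fun hp => ?_⟩
  have hp0 : par y = 0 := by
    by_contra h0
    exact par_notMem_leaves (by omega) hyn h0 (hp ▸ hx)
  have hpar2 : par 2 = 1 := by
    have := h.par_lt (i := 2) (by omega) (by omega)
    have := h.root (i := 2) (by omega) (by omega)
    omega
  have hy1 : y ≠ 1 := fun hy1 => par_notMem_leaves two_pos hn (by omega) (hpar2 ▸ hy1 ▸ hy)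
  exact h.root (by omega) hyn hp0

theorem exists_isAugmentation (h : IsPreorderParent n par) (hn : 4 ≤ n) :
    ∃ P, IsAugmentation n par P ∧
      P.card = (2 * (leaves n par).card + (degTwo n par).card + 1) / 2 ∧
      IsSpineHookGraph n par (parentGraph n par ⊔ pairGraph P) := by
  obtain ⟨H, hH, hcard⟩ := exists_isHookPairs h hn
  refine ⟨H ∪ shiftPairs (leaves n par) 1, fun x y hxy => ?_, ?_,
    isSpineHookGraph_of_isHookPairs h (by omega) hH⟩
  · rcases mem_union.1 hxy with hxy | hxy
    · have := le_of_mem_hooks (hH.mem_hooks hxy).2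
      exact ⟨hH.lt hxy, by omega, hH.par_ne hxy⟩
    · exact isAugmentation_shiftPairs_leaves h (by omega) hxy
  · have := card_pos.2 ⟨0, zero_mem_leaves (n := n) (par := par) (by omega)⟩
    rw [card_union_of_disjoint hH.disjoint_shiftPairs_leaves, hcard, card_shiftPairs]
    omega

/-! ### Transport along the numbering -/

section Transport

theorem degN_comap {V W : Type*} {G : SimpleGraph W} {f : V ↪ W}
    (hG : ∀ x y, G.Adj x y → x ∈ Set.range f) (v : V) : degN (G.comap f) v = degN G (f v) :=
  Set.ncard_preimage_of_injective_subset_range f.injective fun x hx =>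
    hG x (f v) (SimpleGraph.adj_symm G hx)

theorem disjoint_comap {V W : Type*} {G H : SimpleGraph W} (hGH : Disjoint G H) (f : V → W) :
    Disjoint (G.comap f) (H.comap f) :=
  SimpleGraph.disjoint_left.2 fun _ _ => SimpleGraph.disjoint_left.1 hGH _ _

variable {V : Type*} [Fintype V] {pos : V ↪ ℕ}

theorem card_filter_eq_card (hpos : univ.map pos = range (Fintype.card V)) {A : Finset ℕ}
    (hA : ∀ x ∈ A, x < Fintype.card V) {q : V → Prop} [DecidablePred q]
    (hq : ∀ v, q v ↔ pos v ∈ A) : (univ.filter q).card = A.card := by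
  rw [← card_map pos]
  congr 1
  ext x
  rw [mem_map]
  constructor
  · rintro ⟨v, hv, rfl⟩
    exact (hq v).1 (mem_filter.1 hv).2
  · intro hx
    obtain ⟨v, rfl⟩ := (exists_apply_eq_iff_lt_card hpos).2 (hA x hx)
    exact ⟨v, mem_filter.2 ⟨mem_univ v, (hq v).2 hx⟩, rfl⟩

theorem card_edgeFinset_comap_pairGraph (hpos : univ.map pos = range (Fintype.card V))
    {P : Finset (ℕ × ℕ)} (hP : ∀ ⦃x y⦄, (x, y) ∈ P → x < y ∧ y < Fintype.card V)
    [Fintype ((pairGraph P).comap pos).edgeSet] :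
    ((pairGraph P).comap pos).edgeFinset.card = P.card := by
  have hinj : Set.InjOn (fun e : ℕ × ℕ => s(e.1, e.2)) P := by
    rintro ⟨x, y⟩ hxy ⟨x', y'⟩ hxy' heq
    have hlt := (hP hxy).1
    have hlt' := (hP hxy').1
    rcases Sym2.eq_iff.1 heq with ⟨rfl, rfl⟩ | ⟨rfl, rfl⟩
    · rfl
    · exact absurd hlt hlt'.not_gt
  rw [← card_map pos.sym2Map, ← card_image_of_injOn hinj]
  congr 1
  ext e
  simp only [mem_map, mem_image, SimpleGraph.mem_edgeFinset, Embedding.sym2Map_apply, Prod.exists]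
  constructor
  · rintro ⟨e, he, rfl⟩
    induction e with | _ u v
    rcases (pairGraph_adj.1 he).2 with huv | hvu
    · exact ⟨_, _, huv, rfl⟩
    · exact ⟨_, _, hvu, Sym2.eq_swap⟩
  · rintro ⟨x, y, hxy, rfl⟩
    obtain ⟨hlt, hy⟩ := hP hxy
    obtain ⟨u, rfl⟩ := (exists_apply_eq_iff_lt_card hpos).2 (hlt.trans hy)
    obtain ⟨v, rfl⟩ := (exists_apply_eq_iff_lt_card hpos).2 hy
    exact ⟨s(u, v), pairGraph_adj.2 ⟨hlt.ne, Or.inl hxy⟩, rfl⟩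

namespace IsPreorderParent

theorem degN_comap_parentGraph (h : IsPreorderParent (Fintype.card V) par)
    (hpos : univ.map pos = range (Fintype.card V)) (v : V) :
    degN ((parentGraph (Fintype.card V) par).comap pos) v =
      degN (parentGraph (Fintype.card V) par) (pos v) :=
  degN_comap (fun _ _ hxy => (exists_apply_eq_iff_lt_card hpos).2 (h.lt_of_parentGraph_adj hxy)) v

theorem card_filter_degN_eq_one (h : IsPreorderParent (Fintype.card V) par)
    (hpos : univ.map pos = range (Fintype.card V)) (hV : 1 < Fintype.card V) :
    (univ.filter fun v => degN ((parentGraph (Fintype.card V) par).comap pos) v = 1).card =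
      (leaves (Fintype.card V) par).card :=
  card_filter_eq_card hpos (fun _ hx => (mem_leaves.1 hx).1) fun v => by
    rw [h.degN_comap_parentGraph hpos,
      h.degN_parentGraph_eq_one_iff hV ((exists_apply_eq_iff_lt_card hpos).1 ⟨v, rfl⟩)]

theorem card_filter_degN_eq_two (h : IsPreorderParent (Fintype.card V) par)
    (hpos : univ.map pos = range (Fintype.card V)) (hV : 1 < Fintype.card V) :
    (univ.filter fun v => degN ((parentGraph (Fintype.card V) par).comap pos) v = 2).card =
      (degTwo (Fintype.card V) par).card :=
  card_filter_eq_card hpos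
    (fun _ hx => (Nat.lt_succ_self _).trans (pos_and_succ_lt_of_mem_degTwo hx).2) fun v => by
    rw [h.degN_comap_parentGraph hpos,
      h.degN_parentGraph_eq_two_iff hV ((exists_apply_eq_iff_lt_card hpos).1 ⟨v, rfl⟩)]

end IsPreorderParent

end Transport

/-- For every tree `T` on `n ≥ 4` vertices there is an augmenting set of exactly
`⌈(2·l₁ + l₂)/2⌉` non-edges whose addition makes the graph 3-vertex-connected. -/
theorem tree_augmentation_three_connected
    {V : Type*} [Fintype V] (T : SimpleGraph V) (hT : T.IsTree)
    (hn : 4 ≤ Fintype.card V) :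
    ∃ F : Finset (Sym2 V),
      (∀ e ∈ F, ¬ e.IsDiag ∧ e ∉ T.edgeSet) ∧
      F.card = (2 * (Finset.univ.filter (fun v => degN T v = 1)).card
          + (Finset.univ.filter (fun v => degN T v = 2)).card + 1) / 2 ∧
      ThreeConnected (T ⊔ SimpleGraph.fromEdgeSet (F : Set (Sym2 V))) := by
  classical
  have hV : 1 < Fintype.card V := by omega
  obtain ⟨par, pos, h, hpos, rfl⟩ := exists_preorder_numbering hT hV
  obtain ⟨P, hP, hcard, hG⟩ := exists_isAugmentation h hn
  refine ⟨((pairGraph P).comap pos).edgeFinset, fun e he => ⟨?_, ?_⟩, ?_, ?_⟩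
  · exact SimpleGraph.not_isDiag_of_mem_edgeFinset he
  · exact Set.disjoint_right.1 (SimpleGraph.disjoint_edgeSet.2 (disjoint_comap (hP.disjoint h) pos))
      (SimpleGraph.mem_edgeFinset.1 he)
  · rw [card_edgeFinset_comap_pairGraph hpos fun _ _ hxy => ⟨(hP hxy).1, (hP hxy).2.1⟩, hcard,
      h.card_filter_degN_eq_one hpos hV, h.card_filter_degN_eq_two hpos hV]
  · rw [SimpleGraph.coe_edgeFinset, SimpleGraph.fromEdgeSet_edgeSet]
    exact threeConnected_comap hn hpos hG.lt_of_adj fun s t c hs ht hc x y hx hy =>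
      hG.iff_of_isCutColoring (by omega) hs ht hc hx hy
end
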